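/- arXiv:1003.5289 — 2 statements merged into one kernel-verified Lean document; each statement's English description precedes it below -/
import Mathlib

section
/- Let D = π₁⋯πₙ with πₖ ≡ 1 (mod 12) distinct primes of ℤ[τ], let D_T be a subproduct of the πₖ, and let c ∈ O_K be relatively prime to D. Then (D_T/(6c+D))₂ = (2c/D_T)₂, where (·/·)₂ is the quadratic residue symbol in K = ℚ(√−3). -/
noncomputable section

open Complex Real ComplexConjugate

/-- `τ = (−1+√−3)/2`, a primitive cube root of unity. -/
def tau : ℂ := (-1 + Real.sqrt 3 * Complex.I) / 2

/-- `√−3 = 1 + 2τ`, the square root of `−3` with positive imaginary part. -/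
def sqrtm3 : ℂ := Real.sqrt 3 * Complex.I

/-- The ring of integers `O_K = ℤ[τ]` of `K = ℚ(√−3)`, as a subring of `ℂ`. -/
def Eis : Subring ℂ := Subring.closure {tau}

/-- `τ` as an element of `ℤ[τ]`. -/
def tauO : Eis := ⟨tau, Subring.subset_closure rfl⟩

/-- `√−3` as an element of `ℤ[τ]`. -/
def sqrtm3O : Eis := 1 + 2 * tauO

/-- Membership in the lattice `L_ω = ω·ℤ[τ]`. -/
def inLattice (ω : ℝ) (z : ℂ) : Prop := ∃ a : Eis, z = (ω : ℂ) * a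

/-- The Weierstrass `℘`-function of the lattice `L_ω = ω·ℤ[τ]`. -/
def wp (ω : ℝ) (z : ℂ) : ℂ :=
  1 / z ^ 2 + ∑' a : {w : ℂ // inLattice ω w ∧ w ≠ 0},
    (1 / (z - (a : ℂ)) ^ 2 - 1 / (a : ℂ) ^ 2)

/-- The Weierstrass `ζ`-function of the lattice `L_ω = ω·ℤ[τ]`. -/
def wzeta (ω : ℝ) (z : ℂ) : ℂ :=
  1 / z + ∑' a : {w : ℂ // inLattice ω w ∧ w ≠ 0},
    (1 / (z - (a : ℂ)) + 1 / (a : ℂ) + z / (a : ℂ) ^ 2)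

/-- The real cube root of 2, as a complex number. -/
def cbrt2 : ℂ := ((2 : ℝ) ^ ((1 : ℝ) / 3) : ℝ)

/-- The real cube root of 4, as a complex number. -/
def cbrt4 : ℂ := ((4 : ℝ) ^ ((1 : ℝ) / 3) : ℝ)


/-- Characterization of the quadratic residue symbol `(x/d)₂` in `K = ℚ(√−3)`,
taking values in `ℤ[τ]`: it is multiplicative in the denominator, equals `1` on unit
denominators, and on odd prime denominators `p` it is the unique element of `{1, −1}`
congruent to `x^((Np−1)/2)` modulo `p`. -/
def IsQuadSym (q : Eis → Eis → Eis) : Prop :=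
  (∀ x d e, q x (d * e) = q x d * q x e) ∧
  (∀ x u, IsUnit u → q x u = 1) ∧
  (∀ x p, Prime p → IsCoprime p 2 → IsCoprime x p →
    (q x p = 1 ∨ q x p = -1) ∧
    ∀ m : ℕ, Complex.normSq (p : ℂ) = (m : ℝ) → p ∣ (q x p - x ^ ((m - 1) / 2)))

/-- Characterization of the sextic residue symbol `(x/d)₆` in `K = ℚ(√−3)`,
taking values in `ℤ[τ]`: it is multiplicative in the denominator, equals `1` on unit
denominators, and on prime denominators `p` coprime to `6` it is the unique sixth root
of unity congruent to `x^((Np−1)/6)` modulo `p`. -/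
def IsHexSym (h : Eis → Eis → Eis) : Prop :=
  (∀ x d e, h x (d * e) = h x d * h x e) ∧
  (∀ x u, IsUnit u → h x u = 1) ∧
  (∀ x p, Prime p → IsCoprime p 6 → IsCoprime x p →
    (h x p) ^ 6 = 1 ∧
    ∀ m : ℕ, Complex.normSq (p : ℂ) = (m : ℝ) → p ∣ (h x p - x ^ ((m - 1) / 6)))

/-- `ψ` is the Hecke character (Grössencharacter) of `K = ℚ(√−3)` attached to the
elliptic curve `y² = x³ + DT³`, viewed on elements of `O_K = ℤ[τ]` (extended by `0`
off ideals coprime to the conductor `(2√−3·DT)`): it is multiplicative, depends only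
on the ideal generated by its argument, its value divided by its argument depends only
on the argument modulo `2√−3·DT`, and for `α ≡ 1 (mod 6)` coprime to `6·DT` it is given
by `ψ(α) = conj((4DT³/α)₆)·α` (`hex` being the sextic residue symbol). -/
def IsAttachedHecke (DT : Eis) (hex : Eis → Eis → Eis) (ψ : Eis → ℂ) : Prop :=
  (∀ α β, ψ (α * β) = ψ α * ψ β) ∧
  (∀ α, ψ α = 0 ↔ ¬ IsCoprime α (2 * sqrtm3O * DT)) ∧
  (∀ u α, IsUnit u → ψ (u * α) = ψ α) ∧
  (∀ α β, IsCoprime α (2 * sqrtm3O * DT) → IsCoprime β (2 * sqrtm3O * DT) →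
    2 * sqrtm3O * DT ∣ (α - β) → ψ α * (β : ℂ) = ψ β * (α : ℂ)) ∧
  (∀ α, IsCoprime α (6 * DT) → (6 : Eis) ∣ (α - 1) →
    ψ α = conj ((hex (4 * DT ^ 3) α : Eis) : ℂ) * (α : ℂ))

/-- `C` is a complete set of representatives of the residue classes of `ℤ[τ]` modulo `D`
that are relatively prime to `D`. -/
def IsRepSet (D : Eis) (C : Finset Eis) : Prop :=
  (∀ c ∈ C, IsCoprime c D) ∧
  ∀ x : Eis, IsCoprime x D → ∃! c, c ∈ C ∧ D ∣ (x - c)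

/-! The argument is Burde's. A symbol whose numerator or denominator is a rational integer is a
Jacobi symbol: `(k/β)₂ = (k/Nβ)` and `(α/n)₂ = (Nα/n)`. For `α = a + bτ` and `β = c + dτ` the
combination `m = dα - bβ = da - cb` is a rational integer, so that `(d/β)₂(α/β)₂ = (m/β)₂` and
`(-b/α)₂(β/α)₂ = (m/α)₂` express both symbols through Jacobi symbols. Quadratic reciprocity over
`ℚ` then gives `(α/β)₂ = (β/α)₂` as soon as `α ≡ 1 (mod 4)`. With `α = D_T` and `β = 6c + D` this
yields `(D_T/(6c + D))₂ = (6c/D_T)₂ = (3/D_T)₂(2c/D_T)₂`, and `(3/D_T)₂ = 1` because `3 =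
-(√-3)²`. -/

theorem isCoprime_of_dvd_sub {R : Type*} [CommRing R] {x y d : R} (hx : IsCoprime x d)
    (h : d ∣ x - y) : IsCoprime y d := by
  obtain ⟨z, hz⟩ := h
  rw [show y = x + d * -z by linear_combination -hz]
  exact hx.add_mul_left_left _

@[elab_as_elim]
theorem isCoprime_induction_on_prime {R : Type*} [CommSemiring R] [UniqueFactorizationMonoid R]
    {y : R} (hy : ¬IsUnit y) {P : ∀ d, IsCoprime y d → Prop}
    (unit : ∀ u (hu : IsUnit u), P u (isCoprime_one_right.of_isCoprime_of_dvd_right hu.dvd))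
    (prime : ∀ p (hyp : IsCoprime y p), Prime p → P p hyp)
    (mul : ∀ d e (hd : IsCoprime y d) (he : IsCoprime y e), P d hd → P e he →
      P (d * e) (hd.mul_right he))
    {d : R} (hd : IsCoprime y d) : P d hd := by
  induction d using UniqueFactorizationMonoid.induction_on_prime with
  | h₁ => exact absurd (isCoprime_zero_right.mp hd) hy
  | h₂ u hu => exact unit u hu
  | h₃ d p _ hp ih =>
    have hyp := hd.of_mul_right_left
    have hyd := hd.of_mul_right_right
    exact mul p d hyp hyd (prime p hyp hp) (ih hyd)

theorem jacobiSym_comm_of_modEq_one {e : ℤ} (he : e ≡ 1 [ZMOD 4]) {r : ℕ} (hr : Odd r) :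
    jacobiSym e r = jacobiSym r e.natAbs := by
  have hmod : e % 4 = 1 := he
  rcases e.natAbs_eq with h | h
  · conv_lhs => rw [h]
    exact jacobiSym.quadratic_reciprocity_one_mod_four (by lia) hr
  · have h3 : e.natAbs % 4 = 3 := by lia
    have hodd : Odd e.natAbs := Nat.odd_iff.mpr (by lia)
    conv_lhs => rw [h]
    rw [jacobiSym.neg _ hr]
    rcases Nat.odd_mod_four_iff.mp (Nat.odd_iff.mp hr) with h1 | h1
    · rw [ZMod.χ₄_nat_one_mod_four h1, one_mul,
        jacobiSym.quadratic_reciprocity_one_mod_four h1 hodd]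
    · rw [ZMod.χ₄_nat_three_mod_four h1,
        jacobiSym.quadratic_reciprocity_three_mod_four h3 h1, neg_one_mul, neg_neg]

theorem jacobiSym_eq_jacobiSym_natAbs {e : ℤ} {p : ℕ} (hp : p % 4 = 1) :
    jacobiSym e p = jacobiSym e.natAbs p := by
  rcases e.natAbs_eq with h | h
  · rw [← h]
  · conv_lhs => rw [h]
    rw [jacobiSym.neg _ (Nat.odd_iff.mpr (by lia)), ZMod.χ₄_nat_one_mod_four hp, one_mul]

theorem jacobiSym_comm_of_mod_four_eq_one {e : ℤ} (he : Odd e) {p : ℕ} (hp : p % 4 = 1) :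
    jacobiSym e p = jacobiSym p e.natAbs := by
  rw [jacobiSym_eq_jacobiSym_natAbs hp,
    jacobiSym.quadratic_reciprocity_one_mod_four hp (Int.natAbs_odd.mpr he)]

theorem jacobiSym_eq_one_of_left_modEq_sq {x s m : ℤ} (h : x ≡ s ^ 2 [ZMOD m])
    (hs : IsCoprime s m) : jacobiSym x m.natAbs = 1 := by
  have h' : x ≡ s ^ 2 [ZMOD m.natAbs] := h.of_dvd (Int.natAbs_dvd.mpr dvd_rfl)
  rw [jacobiSym.mod_left' h',
    jacobiSym.sq_one' (by simpa [Int.gcd, Int.natAbs_abs] using Int.isCoprime_iff_gcd_eq_one.mp hs)]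

theorem jacobiSym_eq_one_of_right_modEq_sq {a b : ℤ} {p : ℕ} (hb : 4 ∣ b) (ha : Odd a)
    (hab : IsCoprime a b) (hp : p ≡ a ^ 2 [ZMOD b]) : jacobiSym b p = 1 := by
  obtain ⟨b, rfl⟩ := hb
  have hmod : p ≡ a.natAbs ^ 2 [MOD 4 * b.natAbs] := by
    rw [← Int.natCast_modEq_iff]
    push_cast
    rw [sq_abs]
    exact hp.of_dvd (by simp [mul_dvd_mul_left])
  have hsq : Odd (a.natAbs ^ 2) := (Int.natAbs_odd.mpr ha).pow
  have hodd : Odd p := by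
    have hmod2 : p ≡ a.natAbs ^ 2 [MOD 2] := hmod.of_dvd (dvd_mul_of_dvd_left (by norm_num) _)
    exact Nat.odd_iff.mpr (Eq.trans hmod2 (Nat.odd_iff.mp hsq))
  have hgcd : b.gcd a.natAbs = 1 := by
    simpa [Int.gcd, Int.natAbs_abs] using
      Int.isCoprime_iff_gcd_eq_one.mp hab.of_mul_right_right.symm
  calc jacobiSym (4 * b) p
    _ = jacobiSym b p := by rw [jacobiSym.mul_left, jacobiSym.at_four hodd, one_mul]
    _ = jacobiSym b (a.natAbs ^ 2) := by
      rw [jacobiSym.mod_right b hodd, hmod, ← jacobiSym.mod_right b hsq]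
    _ = 1 := by rw [jacobiSym.pow_right, jacobiSym.sq_one hgcd]

theorem sq_sub_mul_add_sq_modEq_one {a b : ℤ} (ha : a ≡ 1 [ZMOD 4]) (hb : b ≡ 0 [ZMOD 4]) :
    a ^ 2 - a * b + b ^ 2 ≡ 1 [ZMOD 4] := by
  simpa using ((ha.pow 2).sub (ha.mul hb)).add (hb.pow 2)

theorem jacobiSym_mul_jacobiSym_eq {a b c d m : ℤ} {p r : ℕ}
    (hp : p = a ^ 2 - a * b + b ^ 2) (hr : r = c ^ 2 - c * d + d ^ 2) (hm : m = d * a - c * b)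
    (ha : a ≡ 1 [ZMOD 4]) (hb : b ≡ 0 [ZMOD 4]) (hd : Odd d) (hcd : IsCoprime c d)
    (hrodd : Odd r) (hmpr : IsCoprime m (p * r)) :
    jacobiSym d r * jacobiSym m r = jacobiSym m p := by
  have hm4 : m ≡ d [ZMOD 4] := by
    simpa [hm] using (ha.mul_left d).sub (hb.mul_left c)
  have hmodd : Odd m := by
    have hm2 : m ≡ d [ZMOD 2] := hm4.of_dvd (by norm_num)
    exact Int.odd_iff.mpr (Eq.trans hm2 (Int.odd_iff.mp hd))
  have hdm : d * m ≡ 1 [ZMOD 4] := by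
    obtain ⟨k, rfl⟩ := hd
    exact (hm4.mul_left _).trans (Int.modEq_iff_dvd.mpr ⟨-(k ^ 2 + k), by ring⟩)
  have hp4 : p % 4 = 1 := by exact_mod_cast hp ▸ sq_sub_mul_add_sq_modEq_one ha hb
  have hrd : jacobiSym r d.natAbs = 1 :=
    jacobiSym_eq_one_of_left_modEq_sq (Int.modEq_iff_dvd.mpr ⟨c - d, by rw [hr]; ring⟩) hcd
  have hprm : jacobiSym p m.natAbs * jacobiSym r m.natAbs = 1 := by
    -- For `α = a + bτ` and `β = c + dτ` one has `αβ̄ = s - mτ`, and `pr` is its norm.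
    set s := a * (c - d) + b * d with hs
    have hnorm : (p * r : ℤ) = s ^ 2 + m * (s + m) := by
      rw [hp, hr, hm, hs]
      ring
    have hsm : IsCoprime s m := by
      rw [hnorm] at hmpr
      exact (IsCoprime.of_add_mul_left_right hmpr).symm.of_isCoprime_of_dvd_left ⟨s, sq s⟩
    rw [← jacobiSym.mul_left]
    exact jacobiSym_eq_one_of_left_modEq_sq
      (Int.modEq_iff_dvd.mpr ⟨-(s + m), by rw [hnorm]; ring⟩) hsm
  have hd0 : d.natAbs ≠ 0 := (Int.natAbs_odd.mpr hd).pos.ne'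
  have hm0 : m.natAbs ≠ 0 := (Int.natAbs_odd.mpr hmodd).pos.ne'
  calc jacobiSym d r * jacobiSym m r
    _ = jacobiSym r (d * m).natAbs := by
      rw [← jacobiSym.mul_left, jacobiSym_comm_of_modEq_one hdm hrodd]
    _ = jacobiSym r m.natAbs := by
      rw [Int.natAbs_mul, jacobiSym.mul_right' _ hd0 hm0, hrd, one_mul]
    _ = jacobiSym p m.natAbs := (Int.eq_of_mul_eq_one hprm).symm
    _ = jacobiSym m p := (jacobiSym_comm_of_mod_four_eq_one hmodd hp4).symm

theorem odd_of_isCoprime_two {n : ℕ} (h : IsCoprime (2 : ℤ) n) : Odd n :=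
  Nat.coprime_two_left.mp (Nat.isCoprime_iff_coprime.mp h)

theorem dvd_jacobiSym_sub_pow {l : ℕ} (hl : l.Prime) (hodd : Odd l) (k : ℤ) :
    (l : ℤ) ∣ jacobiSym k l - k ^ ((l - 1) / 2) := by
  have := Fact.mk hl
  rw [← jacobiSym.legendreSym.to_jacobiSym, ← ZMod.intCast_zmod_eq_zero_iff_dvd, Int.cast_sub,
    legendreSym.eq_pow, Int.cast_pow, show l / 2 = (l - 1) / 2 by grind, sub_self]

theorem dvd_jacobiSym_sq_sub_pow {l : ℕ} (hl : l.Prime) (hodd : Odd l) {k : ℤ}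
    (hk : IsCoprime k l) : (l : ℤ) ∣ jacobiSym k (l ^ 2) - k ^ ((l ^ 2 - 1) / 2) := by
  have hexp : (l ^ 2 - 1) / 2 = (l - 1) * ((l + 1) / 2) := by
    obtain ⟨m, rfl⟩ := hodd
    rw [show (2 * m + 1) ^ 2 - 1 = 2 * (2 * m * (m + 1)) by grind]
    grind
  rw [jacobiSym.pow_right, jacobiSym.sq_one (Int.isCoprime_iff_gcd_eq_one.mp hk), hexp, pow_mul]
  simpa using ((Int.ModEq.pow_card_sub_one_eq_one hl hk).pow ((l + 1) / 2)).dvd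

namespace Eis

theorem isPrimitiveRoot_tau : IsPrimitiveRoot tau 3 := by
  have hsq : tau ^ 2 + tau + 1 = 0 := by
    have hsqrt : ((√3 : ℝ) : ℂ) ^ 2 = 3 := by exact_mod_cast Real.sq_sqrt (by norm_num)
    unfold tau
    linear_combination (I ^ 2 / 4) * hsqrt + (3 / 4) * I_sq
  refine (IsPrimitiveRoot.iff_orderOf).mpr (orderOf_eq_prime ?_ ?_)
  · linear_combination (tau - 1) * hsq
  · rintro h
    norm_num [show tau = 1 from h] at hsq

theorem tauO_sq : tauO ^ 2 = -1 - tauO := by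
  have h := isPrimitiveRoot_tau.geom_sum_eq_zero (by norm_num)
  rw [Finset.sum_range_succ, Finset.sum_range_succ, Finset.sum_range_one] at h
  refine Subtype.ext ?_
  change tau ^ 2 = -1 - tau
  linear_combination h

theorem exists_eq_add_mul_tauO (x : Eis) : ∃ a b : ℤ, x = a + b * tauO := by
  obtain ⟨x, hx⟩ := x
  suffices ∃ a b : ℤ, x = ((a + b * tauO : Eis) : ℂ) by simpa only [Subtype.ext_iff] using this
  induction hx using Subring.closure_induction with
  | mem x hx => exact ⟨0, 1, by simp [tauO, Set.mem_singleton_iff.mp hx]⟩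
  | zero => exact ⟨0, 0, by simp⟩
  | one => exact ⟨1, 0, by simp⟩
  | add x y _ _ hx hy =>
    obtain ⟨⟨a, b, rfl⟩, c, d, rfl⟩ := And.intro hx hy
    exact ⟨a + c, b + d, by push_cast; ring⟩
  | neg x _ hx =>
    obtain ⟨a, b, rfl⟩ := hx
    exact ⟨-a, -b, by push_cast; ring⟩
  | mul x y _ _ hx hy =>
    obtain ⟨⟨a, b, rfl⟩, c, d, rfl⟩ := And.intro hx hy
    refine ⟨a * c - b * d, a * d + b * c - b * d, ?_⟩
    rw [← Subring.coe_mul, Subtype.coe_inj]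
    push_cast
    linear_combination (b * d : Eis) * tauO_sq

theorem surjective_of_tauO_mem_range {R : Type*} [Ring R] (f : R →+* Eis)
    (h : tauO ∈ f.range) : Function.Surjective f := by
  intro x
  obtain ⟨a, b, rfl⟩ := exists_eq_add_mul_tauO x
  obtain ⟨t, ht⟩ := h
  exact ⟨a + b * t, by simp [ht]⟩

instance isPrincipalIdealRing : IsPrincipalIdealRing Eis := by
  let K := CyclotomicField 3 ℚ
  have : IsCyclotomicExtension {3} ℚ K := CyclotomicField.isCyclotomicExtension 3 ℚ
  have : IsPrincipalIdealRing (NumberField.RingOfIntegers K) :=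
    IsCyclotomicExtension.Rat.three_pid K
  let φ : K →ₐ[ℚ] ℂ := IsAlgClosed.lift
  obtain ⟨ζ, hζτ, hζ⟩ : ∃ ζ : K, φ ζ = tau ∧ IsPrimitiveRoot ζ 3 := by
    have hφ := (IsCyclotomicExtension.zeta_spec 3 ℚ K).map_of_injective φ.injective
    obtain ⟨i, -, hi⟩ := hφ.eq_pow_of_pow_eq_one isPrimitiveRoot_tau.pow_eq_one
    rw [← map_pow] at hi
    exact ⟨_, hi, .of_map_of_injective (hi ▸ isPrimitiveRoot_tau) φ.injective⟩
  have hadjoin : ∀ x ∈ Algebra.adjoin ℤ {ζ}, φ x ∈ Eis := by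
    intro x hx
    induction hx using Algebra.adjoin_induction with
    | mem x hx => rw [Set.mem_singleton_iff.mp hx, hζτ]; exact tauO.2
    | algebraMap r => simp
    | add x y _ _ hx hy => rw [map_add]; exact add_mem hx hy
    | mul x y _ _ hx hy => rw [map_mul]; exact mul_mem hx hy
  let f : Algebra.adjoin ℤ {ζ} →+* Eis := φ.toRingHom.restrict _ Eis hadjoin
  have hf : Function.Surjective f := surjective_of_tauO_mem_range f
    ⟨⟨ζ, Algebra.self_mem_adjoin_singleton ℤ ζ⟩, Subtype.ext hζτ⟩
  let e := hζ.adjoinEquivRingOfIntegers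
  exact IsPrincipalIdealRing.of_surjective (f.comp e.symm.toRingEquiv.toRingHom)
    (hf.comp e.symm.surjective)

theorem tauO_isUnit : IsUnit tauO :=
  .of_mul_eq_one (-1 - tauO) (by linear_combination -tauO_sq)

theorem star_tau : star tau = -1 - tau := by
  have hre : tau.re = -1 / 2 := by simp [tau]
  refine Complex.ext ?_ ?_
  · simp only [star_def, conj_re, sub_re, neg_re, one_re, hre]
    norm_num
  · simp

theorem star_mem {x : ℂ} (hx : x ∈ Eis) : star x ∈ Eis := by
  suffices Eis ≤ Eis.comap (starRingEnd ℂ) from this hx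
  refine Subring.closure_le.mpr (Set.singleton_subset_iff.mpr ?_)
  change star tau ∈ Eis
  exact star_tau ▸ (-1 - tauO).2

/-- Complex conjugation on `ℤ[τ]`, the nontrivial automorphism of `ℤ[τ]`. -/
def conjEquiv : Eis ≃+* Eis :=
  (starRingAut (R := ℂ)).restrict Eis Eis
    fun _ => ⟨star_mem, fun hx => by simpa using star_mem hx⟩

theorem coe_conjEquiv (x : Eis) : (conjEquiv x : ℂ) = star (x : ℂ) := rfl

theorem conjEquiv_conjEquiv (x : Eis) : conjEquiv (conjEquiv x) = x :=
  Subtype.ext (star_star (x : ℂ))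

theorem conjEquiv_add_mul_tauO (a b : ℤ) :
    conjEquiv (a + b * tauO) = (a - b) + (-b) * tauO := by
  have hτ : conjEquiv tauO = -1 - tauO := Subtype.ext star_tau
  rw [map_add, map_mul, map_intCast, map_intCast, hτ]
  ring

/-- The norm `N x = x * x̄` of `x : ℤ[τ]` as a natural number. The floor only serves to turn
`normSq x`, which is an integer, into a natural number: see `normSq_eq_absNorm`. -/
def absNorm (x : Eis) : ℕ := ⌊normSq x⌋₊

theorem normSq_add_mul_tauO (a b : ℤ) :
    normSq ((a + b * tauO : Eis) : ℂ) = (a ^ 2 - a * b + b ^ 2 : ℤ) := by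
  have h : (a + b * tauO) * conjEquiv (a + b * tauO) = (a ^ 2 - a * b + b ^ 2 : ℤ) := by
    rw [conjEquiv_add_mul_tauO]
    push_cast
    linear_combination (-(b ^ 2 : Eis)) * tauO_sq
  have h' := congrArg Subtype.val h
  rw [Subring.coe_mul, coe_conjEquiv, star_def, mul_conj, Subring.coe_intCast] at h'
  exact_mod_cast h'

theorem normSq_eq_absNorm (x : Eis) : normSq (x : ℂ) = absNorm x := by
  obtain ⟨a, b, rfl⟩ := exists_eq_add_mul_tauO x
  have hnonneg : 0 ≤ a ^ 2 - a * b + b ^ 2 := by nlinarith [sq_nonneg (2 * a - b), sq_nonneg b]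
  obtain ⟨m, hm⟩ := Int.eq_ofNat_of_zero_le hnonneg
  rw [absNorm, normSq_add_mul_tauO, hm]
  simp

theorem absNorm_add_mul_tauO (a b : ℤ) :
    (absNorm (a + b * tauO) : ℤ) = a ^ 2 - a * b + b ^ 2 := by
  exact_mod_cast (normSq_eq_absNorm _).symm.trans (normSq_add_mul_tauO a b)

theorem mul_conjEquiv (x : Eis) : x * conjEquiv x = absNorm x := by
  refine Subtype.ext ?_
  rw [Subring.coe_mul, coe_conjEquiv, star_def, mul_conj, normSq_eq_absNorm]
  simp

theorem dvd_absNorm (x : Eis) : x ∣ absNorm x := ⟨conjEquiv x, (mul_conjEquiv x).symm⟩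

theorem absNorm_mul (x y : Eis) : absNorm (x * y) = absNorm x * absNorm y := by
  have h := normSq_mul (x : ℂ) y
  rw [← Subring.coe_mul, normSq_eq_absNorm, normSq_eq_absNorm, normSq_eq_absNorm] at h
  exact_mod_cast h

theorem absNorm_conjEquiv (x : Eis) : absNorm (conjEquiv x) = absNorm x := by
  simp [absNorm, coe_conjEquiv]

theorem absNorm_one : absNorm 1 = 1 := by simp [absNorm]

theorem absNorm_intCast (k : ℤ) : (absNorm (k : Eis) : ℤ) = k ^ 2 := by
  simpa using absNorm_add_mul_tauO k 0

theorem absNorm_natCast (k : ℕ) : absNorm (k : Eis) = k ^ 2 := by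
  exact_mod_cast absNorm_intCast k

theorem absNorm_eq_zero {x : Eis} : absNorm x = 0 ↔ x = 0 := by
  rw [← Nat.cast_eq_zero (R := ℝ), ← normSq_eq_absNorm, normSq_eq_zero, ZeroMemClass.coe_eq_zero]

theorem isUnit_iff_absNorm_eq_one {x : Eis} : IsUnit x ↔ absNorm x = 1 := by
  refine ⟨fun h => ?_, fun h => .of_mul_eq_one (conjEquiv x) (by simp [mul_conjEquiv, h])⟩
  obtain ⟨y, hy⟩ := h.exists_right_inv
  exact Nat.eq_one_of_mul_eq_one_right (by rw [← absNorm_mul, hy, absNorm_one])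

theorem isCoprime_absNorm {k : ℤ} {x : Eis} (h : IsCoprime (k : Eis) x) :
    IsCoprime k (absNorm x) := by
  obtain ⟨u, v, huv⟩ := h
  obtain ⟨a, b, rfl⟩ := exists_eq_add_mul_tauO u
  have h : v * x = (1 - k * a : ℤ) + (-(k * b) : ℤ) * tauO := by
    push_cast
    linear_combination huv
  have hnorm := absNorm_add_mul_tauO (1 - k * a) (-(k * b))
  rw [← h, absNorm_mul, Nat.cast_mul] at hnorm
  exact ⟨2 * a - b - k * (a ^ 2 - a * b + b ^ 2), absNorm v, by linear_combination hnorm⟩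

theorem not_isUnit_two : ¬IsUnit (2 : Eis) := by
  have h : absNorm 2 = 4 := absNorm_natCast 2
  rw [isUnit_iff_absNorm_eq_one, h]
  norm_num

theorem not_isUnit_two_mul (x : Eis) : ¬IsUnit (2 * x) :=
  fun h => not_isUnit_two (isUnit_of_mul_isUnit_left h)

theorem absNorm_dvd_absNorm {x y : Eis} (h : x ∣ y) : absNorm x ∣ absNorm y := by
  obtain ⟨z, rfl⟩ := h
  exact ⟨absNorm z, absNorm_mul x z⟩

theorem exists_prime_dvd_natCast {p : Eis} (hp : Prime p) :
    ∃ l : ℕ, l.Prime ∧ p ∣ (l : Eis) := by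
  have hnorm : absNorm p ≠ 0 := absNorm_eq_zero.not.mpr hp.ne_zero
  have hdvd : p ∣ ((absNorm p).primeFactorsList.map (Nat.cast : ℕ → Eis)).prod := by
    rw [← Nat.cast_list_prod, Nat.prod_primeFactorsList hnorm]
    exact dvd_absNorm p
  obtain ⟨_, hmem, hl⟩ := hp.dvd_prod_iff.mp hdvd
  obtain ⟨l, hlmem, rfl⟩ := List.mem_map.mp hmem
  exact ⟨l, Nat.prime_of_mem_primeFactorsList hlmem, hl⟩

theorem absNorm_eq_or_eq_sq {p : Eis} (hp : ¬IsUnit p) {l : ℕ} (hl : l.Prime)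
    (h : p ∣ (l : Eis)) : absNorm p = l ∨ absNorm p = l ^ 2 := by
  have hdvd : absNorm p ∣ l ^ 2 := absNorm_natCast l ▸ absNorm_dvd_absNorm h
  obtain ⟨i, hi, hnorm⟩ := (Nat.dvd_prime_pow hl).mp hdvd
  interval_cases i
  · exact absurd (isUnit_iff_absNorm_eq_one.mpr (by simpa using hnorm)) hp
  · exact .inl (by simpa using hnorm)
  · exact .inr hnorm

theorem prime_natCast_or_exists_prime_absNorm_eq {l : ℕ} (hl : l.Prime) :
    Prime (l : Eis) ∨ ∃ p : Eis, Prime p ∧ absNorm p = l := by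
  have hunit : ¬IsUnit (l : Eis) := by
    rw [isUnit_iff_absNorm_eq_one, absNorm_natCast]
    exact (Nat.one_lt_pow two_ne_zero hl.one_lt).ne'
  obtain ⟨p, hp, z, hz⟩ := WfDvdMonoid.exists_irreducible_factor hunit (by simp [hl.ne_zero])
  rcases absNorm_eq_or_eq_sq hp.not_isUnit hl ⟨z, hz⟩ with hnorm | hnorm
  · exact .inr ⟨p, hp.prime, hnorm⟩
  · have hz1 : absNorm z = 1 := by
      have hmul := absNorm_mul p z
      rw [← hz, absNorm_natCast, hnorm] at hmul
      exact Nat.eq_of_mul_eq_mul_left (pow_pos hl.pos 2) (by rw [← hmul, mul_one])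
    have hassoc := associated_mul_unit_right p z (isUnit_iff_absNorm_eq_one.mpr hz1)
    exact .inl ((hz ▸ hassoc).prime hp.prime)

theorem exists_dvd_sq_add_self_add_one {l : ℕ} (hl : l.Prime) (h : l % 3 ≠ 2) :
    ∃ z : ℕ, l ∣ z ^ 2 + z + 1 := by
  have := Fact.mk hl
  obtain rfl | h3 := eq_or_ne l 3
  · exact ⟨1, by norm_num⟩
  have hmod : l % 3 = 1 := by
    have := (Nat.prime_dvd_prime_iff_eq Nat.prime_three hl).not.mpr h3.symm
    lia
  obtain ⟨u, hu⟩ := exists_prime_orderOf_dvd_card' (G := (ZMod l)ˣ) 3 (by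
    rw [Nat.card_eq_fintype_card, ZMod.card_units]
    exact (Nat.modEq_iff_dvd' hl.one_le).mp hmod.symm)
  have hroot := ((IsPrimitiveRoot.iff_orderOf.mpr hu).map_of_injective
    (f := Units.coeHom (ZMod l)) Units.val_injective).geom_sum_eq_zero (by norm_num)
  refine ⟨(u : ZMod l).val, (ZMod.natCast_eq_zero_iff _ _).mp ?_⟩
  push_cast
  rw [ZMod.natCast_zmod_val, ← hroot, Finset.sum_range_succ, Finset.sum_range_succ,
    Finset.sum_range_one, Units.coeHom_apply]
  ring

theorem mod_three_eq_two_of_prime_natCast {l : ℕ} (hl : l.Prime) (hp : Prime (l : Eis)) :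
    l % 3 = 2 := by
  by_contra hmod
  obtain ⟨z, hz⟩ := exists_dvd_sq_add_self_add_one hl hmod
  have hconj : conjEquiv (z - tauO) = z + 1 + tauO := by
    simpa [sub_eq_add_neg, add_assoc] using conjEquiv_add_mul_tauO z (-1)
  have hfactor : (l : Eis) ∣ (z - tauO) * (z + 1 + tauO) := by
    convert! Nat.cast_dvd_cast (α := Eis) hz using 1
    push_cast
    linear_combination -tauO_sq
  have hboth : (l : Eis) ∣ z - tauO ∧ (l : Eis) ∣ z + 1 + tauO := by
    rw [← hconj] at hfactor ⊢
    rcases hp.dvd_or_dvd hfactor with h | h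
    · exact ⟨h, by simpa using map_dvd conjEquiv h⟩
    · exact ⟨by simpa [conjEquiv_conjEquiv] using map_dvd conjEquiv h, h⟩
  have hdvd : (l : Eis) ∣ (1 : ℤ) + (2 : ℤ) * tauO := by
    convert! dvd_sub hboth.2 hboth.1 using 1
    push_cast
    ring
  have hnorm : absNorm ((1 : ℤ) + (2 : ℤ) * tauO) = 3 :=
    Nat.cast_injective (R := ℤ) ((absNorm_add_mul_tauO 1 2).trans (by norm_num))
  have hsq : l ^ 2 ∣ 3 := absNorm_natCast l ▸ hnorm ▸ absNorm_dvd_absNorm hdvd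
  have hle : l ^ 2 ≤ 3 := Nat.le_of_dvd three_pos hsq
  nlinarith [hl.two_le]

theorem dvd_pow_sub_conjEquiv {l : ℕ} (hl : l.Prime) (h3 : l % 3 = 2) (x : Eis) :
    (l : Eis) ∣ x ^ l - conjEquiv x := by
  have := Fact.mk hl
  have fermat (k : ℤ) : (l : Eis) ∣ k ^ l - k := by
    have h : (l : ℤ) ∣ k ^ l - k := by
      rw [← ZMod.intCast_zmod_eq_zero_iff_dvd]
      simp
    exact_mod_cast map_dvd (Int.castRingHom Eis) h
  have hτ : tauO ^ l = -1 - tauO := by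
    have hcube : tauO ^ 3 = 1 := by linear_combination (tauO - 1) * tauO_sq
    rw [← Nat.div_add_mod l 3, h3, pow_add, pow_mul, hcube, one_pow, one_mul, tauO_sq]
  obtain ⟨a, b, rfl⟩ := exists_eq_add_mul_tauO x
  obtain ⟨r, hr⟩ := exists_add_pow_prime_eq hl (a : Eis) (b * tauO)
  have hsplit : (a + b * tauO) ^ l - conjEquiv (a + b * tauO) =
      (a ^ l - a) + (b ^ l - b) * (-1 - tauO) + l * (a * (b * tauO) * r) := by
    rw [hr, mul_pow, hτ, conjEquiv_add_mul_tauO]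
    ring
  rw [hsplit]
  exact ((fermat a).add ((fermat b).mul_right _)).add (dvd_mul_right _ _)

theorem intCast_dvd_add_mul_tauO {k a b : ℤ} :
    (k : Eis) ∣ a + b * tauO ↔ k ∣ a ∧ k ∣ b := by
  refine ⟨fun ⟨z, hz⟩ => ?_, fun ⟨⟨u, hu⟩, ⟨v, hv⟩⟩ => ⟨u + v * tauO, ?_⟩⟩
  · obtain ⟨u, v, rfl⟩ := exists_eq_add_mul_tauO z
    have hzero : absNorm ((a - k * u : ℤ) + (b - k * v : ℤ) * tauO) = 0 := by
      rw [absNorm_eq_zero]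
      push_cast
      linear_combination hz
    have hform := absNorm_add_mul_tauO (a - k * u) (b - k * v)
    rw [hzero, Nat.cast_zero] at hform
    have hb : b - k * v = 0 := by
      nlinarith [sq_nonneg (2 * (a - k * u) - (b - k * v)), sq_nonneg (b - k * v)]
    have ha : a - k * u = 0 := by simpa [hb] using hform.symm
    exact ⟨⟨u, sub_eq_zero.mp ha⟩, ⟨v, sub_eq_zero.mp hb⟩⟩
  · rw [hu, hv]
    push_cast
    ring

theorem exists_eq_intCast_mul_primitive {x : Eis} (hx : x ≠ 0) :
    ∃ g a b : ℤ, IsCoprime a b ∧ x = g * (a + b * tauO) := by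
  obtain ⟨a, b, rfl⟩ := exists_eq_add_mul_tauO x
  have hgcd : 0 < a.gcd b := by
    refine Int.gcd_pos_iff.mpr (not_and_or.mp fun ⟨ha, hb⟩ => hx ?_)
    simp [ha, hb]
  obtain ⟨g, a, b, -, hcop, rfl, rfl⟩ := Int.exists_gcd_one' hgcd
  refine ⟨g, a, b, Int.isCoprime_iff_gcd_eq_one.mpr hcop, ?_⟩
  push_cast
  ring

theorem isCoprime_two_of_four_dvd_sub_one {x : Eis} (hx : 4 ∣ x - 1) : IsCoprime 2 x := by
  obtain ⟨z, hz⟩ := hx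
  exact ⟨-2 * z, 1, by linear_combination hz⟩

theorem four_dvd_add_mul_tauO_sub_one {a b : ℤ} :
    4 ∣ a + b * tauO - 1 ↔ a ≡ 1 [ZMOD 4] ∧ b ≡ 0 [ZMOD 4] := by
  rw [Int.modEq_comm, Int.modEq_iff_dvd, Int.modEq_zero_iff_dvd, ← intCast_dvd_add_mul_tauO,
    Int.cast_sub, Int.cast_one, Int.cast_ofNat, add_sub_right_comm]

theorem absNorm_mod_four_eq_one {x : Eis} (hx : 4 ∣ x - 1) : absNorm x % 4 = 1 := by
  obtain ⟨a, b, rfl⟩ := exists_eq_add_mul_tauO x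
  obtain ⟨ha, hb⟩ := four_dvd_add_mul_tauO_sub_one.mp hx
  exact_mod_cast absNorm_add_mul_tauO a b ▸ sq_sub_mul_add_sq_modEq_one ha hb

theorem exists_eq_intCast_mul_primitive_of_four_dvd_sub_one {x : Eis} (hx : 4 ∣ x - 1) :
    ∃ g a b : ℤ, IsCoprime a b ∧ g ≡ 1 [ZMOD 4] ∧ 4 ∣ a + b * tauO - 1 ∧
      x = g * (a + b * tauO) := by
  have hx0 : x ≠ 0 := by
    rintro rfl
    exact not_isUnit_two (isCoprime_zero_right.mp (isCoprime_two_of_four_dvd_sub_one hx))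
  obtain ⟨g, a, b, hcop, rfl⟩ := exists_eq_intCast_mul_primitive hx0
  obtain ⟨hga, hgb⟩ : g * a ≡ 1 [ZMOD 4] ∧ g * b ≡ 0 [ZMOD 4] := by
    rw [← four_dvd_add_mul_tauO_sub_one]
    convert! hx using 2
    push_cast
    ring
  have hg : g ≡ 1 [ZMOD 4] ∨ -g ≡ 1 [ZMOD 4] := by
    have hmod2 : g * a ≡ 1 [ZMOD 2] := hga.of_dvd (by norm_num)
    obtain ⟨k, rfl⟩ := (Int.odd_mul.mp (Int.odd_iff.mpr hmod2)).1
    simp only [Int.ModEq]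
    lia
  have hprim {g a b : ℤ} (hg : g ≡ 1 [ZMOD 4]) (hga : g * a ≡ 1 [ZMOD 4])
      (hgb : g * b ≡ 0 [ZMOD 4]) : 4 ∣ a + b * tauO - 1 :=
    four_dvd_add_mul_tauO_sub_one.mpr ⟨by simpa using (hg.mul_right a).symm.trans hga,
      by simpa using (hg.mul_right b).symm.trans hgb⟩
  rcases hg with hg | hg
  · exact ⟨g, a, b, hcop, hg, hprim hg hga hgb, rfl⟩
  · exact ⟨-g, -a, -b, hcop.neg_neg, hg, hprim hg (by simpa using hga) (by simpa using hgb),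
      by push_cast; ring⟩

theorem isCoprime_intCast_add_mul_tauO {c d : ℤ} (h : IsCoprime c d) :
    IsCoprime (d : Eis) (c + d * tauO) :=
  (h.symm.intCast (R := Eis)).add_mul_left_right tauO

theorem odd_absNorm {x : Eis} (h : IsCoprime 2 x) : Odd (absNorm x) :=
  odd_of_isCoprime_two (isCoprime_absNorm (k := 2) (by exact_mod_cast h))

theorem odd_of_isCoprime_two_intCast {k : ℤ} (h : IsCoprime (2 : Eis) k) : Odd k := by
  have hsq : Odd (k ^ 2) := absNorm_intCast k ▸ (odd_absNorm h).natCast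
  exact (Int.odd_pow' two_ne_zero).mp hsq

end Eis

namespace IsQuadSym

open Eis

variable {q : Eis → Eis → Eis}

theorem mul_right (hq : IsQuadSym q) (x d e : Eis) : q x (d * e) = q x d * q x e := hq.1 x d e

theorem eq_one_of_isUnit (hq : IsQuadSym q) (x : Eis) {u : Eis} (hu : IsUnit u) : q x u = 1 :=
  hq.2.1 x u hu

theorem associated_right (hq : IsQuadSym q) (x : Eis) {d e : Eis} (h : Associated d e) :
    q x d = q x e := by
  obtain ⟨u, rfl⟩ := h
  rw [hq.mul_right, hq.eq_one_of_isUnit x u.isUnit, mul_one]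

theorem eq_one_or_neg_one (hq : IsQuadSym q) {x d : Eis} (hd : IsCoprime (2 * x) d) :
    q x d = 1 ∨ q x d = -1 := by
  induction hd using isCoprime_induction_on_prime (not_isUnit_two_mul _) with
  | unit u hu => exact .inl (hq.eq_one_of_isUnit x hu)
  | prime p hxp hp =>
    exact (hq.2.2 x p hp hxp.of_mul_left_left.symm hxp.of_mul_left_right).1
  | mul d e _ _ hd he =>
    rw [hq.mul_right]
    rcases hd with hd | hd <;> rcases he with he | he <;> simp [hd, he]

theorem dvd_sub_pow (hq : IsQuadSym q) {x p : Eis} (hp : Prime p) (hxp : IsCoprime (2 * x) p) :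
    p ∣ q x p - x ^ ((absNorm p - 1) / 2) :=
  (hq.2.2 x p hp hxp.of_mul_left_left.symm hxp.of_mul_left_right).2 _ (normSq_eq_absNorm p)

theorem eq_of_dvd_sub_pow (hq : IsQuadSym q) {x p e : Eis} (hp : Prime p)
    (hxp : IsCoprime (2 * x) p) (he : e = 1 ∨ e = -1)
    (h : p ∣ e - x ^ ((absNorm p - 1) / 2)) : q x p = e := by
  have hp2 : ¬p ∣ 2 := fun h2 => hp.not_isUnit (hxp.of_mul_left_left.isUnit_of_dvd' h2 dvd_rfl)
  have hdvd : p ∣ q x p - e := by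
    simpa using dvd_sub (hq.dvd_sub_pow hp hxp) h
  rcases hq.eq_one_or_neg_one hxp with h1 | h1 <;> rcases he with rfl | rfl <;> rw [h1] at hdvd ⊢
  · exact absurd ((by norm_num : (1 : Eis) - -1 = 2) ▸ hdvd) hp2
  · exact absurd ((by norm_num : -(-1 - 1 : Eis) = 2) ▸ hdvd.neg_right) hp2

theorem mul_left (hq : IsQuadSym q) {x y d : Eis} (hd : IsCoprime (2 * (x * y)) d) :
    q (x * y) d = q x d * q y d := by
  induction hd using isCoprime_induction_on_prime (not_isUnit_two_mul _) with
  | unit u hu => simp [hq.eq_one_of_isUnit _ hu]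
  | prime p hxyp hp =>
    have hxp : IsCoprime (2 * x) p := (mul_assoc 2 x y ▸ hxyp).of_mul_left_left
    have hyp : IsCoprime (2 * y) p := (mul_left_comm 2 x y ▸ hxyp).of_mul_left_right
    refine hq.eq_of_dvd_sub_pow hp hxyp ?_ ?_
    · rcases hq.eq_one_or_neg_one hxp with h1 | h1 <;>
        rcases hq.eq_one_or_neg_one hyp with h2 | h2 <;> simp [h1, h2]
    · rw [mul_pow]
      exact dvd_mul_sub_mul (hq.dvd_sub_pow hp hxp) (hq.dvd_sub_pow hp hyp)
  | mul d e _ _ hd he =>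
    rw [hq.mul_right, hd, he, hq.mul_right, hq.mul_right]
    ring

theorem congr_left (hq : IsQuadSym q) {x y d : Eis} (hd : IsCoprime (2 * x) d)
    (h : d ∣ x - y) : q x d = q y d := by
  revert h
  induction hd using isCoprime_induction_on_prime (not_isUnit_two_mul _) with
  | unit u hu => simp [hq.eq_one_of_isUnit _ hu]
  | prime p hxp hp =>
    intro h
    have hyp : IsCoprime (2 * y) p :=
      hxp.of_mul_left_left.mul_left (isCoprime_of_dvd_sub hxp.of_mul_left_right h)
    refine (hq.eq_of_dvd_sub_pow hp hyp (hq.eq_one_or_neg_one hxp) ?_).symm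
    have hsum := dvd_add (hq.dvd_sub_pow hp hxp)
      (h.trans (sub_dvd_pow_sub_pow x y ((absNorm p - 1) / 2)))
    rwa [sub_add_sub_cancel] at hsum
  | mul d e _ _ hd he =>
    intro h
    rw [hq.mul_right, hq.mul_right, hd (dvd_of_mul_right_dvd h), he (dvd_of_mul_left_dvd h)]

theorem sq_left (hq : IsQuadSym q) {x d : Eis} (hd : IsCoprime (2 * x) d) :
    q (x ^ 2) d = 1 := by
  have hd2 : IsCoprime (2 * (x * x)) d :=
    mul_assoc 2 x x ▸ hd.mul_left hd.of_mul_left_right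
  rw [sq, hq.mul_left hd2]
  rcases hq.eq_one_or_neg_one hd with h | h <;> simp [h]

theorem map_conjEquiv (hq : IsQuadSym q) {x d : Eis} (hd : IsCoprime (2 * x) d) :
    q (conjEquiv x) (conjEquiv d) = q x d := by
  induction hd using isCoprime_induction_on_prime (not_isUnit_two_mul _) with
  | unit u hu =>
    rw [hq.eq_one_of_isUnit _ hu, hq.eq_one_of_isUnit _ (hu.map conjEquiv)]
  | prime p hxp hp =>
    have hxp' : IsCoprime (2 * conjEquiv x) (conjEquiv p) := by
      simpa [map_ofNat conjEquiv 2] using hxp.map conjEquiv.toRingHom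
    have hval := hq.eq_one_or_neg_one hxp
    refine hq.eq_of_dvd_sub_pow ((MulEquiv.prime_iff conjEquiv).mpr hp) hxp' hval ?_
    have hfix : conjEquiv (q x p) = q x p := by rcases hval with h | h <;> simp [h]
    simpa [hfix, absNorm_conjEquiv] using map_dvd conjEquiv (hq.dvd_sub_pow hp hxp)
  | mul d e _ _ hd he => rw [map_mul, hq.mul_right, hq.mul_right, hd, he]

theorem intCast_left (hq : IsQuadSym q) {k : ℤ} {d : Eis} (hd : IsCoprime (2 * (k : Eis)) d) :
    q k d = (jacobiSym k (absNorm d) : ℤ) := by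
  induction hd using isCoprime_induction_on_prime (not_isUnit_two_mul _) with
  | unit u hu =>
    rw [hq.eq_one_of_isUnit _ hu, isUnit_iff_absNorm_eq_one.mp hu, jacobiSym.one_right,
      Int.cast_one]
  | prime p hkp hp =>
    obtain ⟨l, hl, hpl⟩ := exists_prime_dvd_natCast hp
    have hcop : IsCoprime (2 * k) (absNorm p) := isCoprime_absNorm (by exact_mod_cast hkp)
    refine hq.eq_of_dvd_sub_pow hp hkp ?_ ?_
    · exact_mod_cast jacobiSym.eq_one_or_neg_one
        (Int.isCoprime_iff_gcd_eq_one.mp hcop.of_mul_left_right)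
    · have hdvd : (l : ℤ) ∣ jacobiSym k (absNorm p) - k ^ ((absNorm p - 1) / 2) := by
        rcases absNorm_eq_or_eq_sq hp.not_isUnit hl hpl with hnorm | hnorm <;> rw [hnorm] at hcop ⊢
        · exact dvd_jacobiSym_sub_pow hl (odd_of_isCoprime_two hcop.of_mul_left_left) k
        · rw [Nat.cast_pow, IsCoprime.pow_right_iff two_pos] at hcop
          exact dvd_jacobiSym_sq_sub_pow hl (odd_of_isCoprime_two hcop.of_mul_left_left)
            hcop.of_mul_left_right
      exact hpl.trans (by exact_mod_cast map_dvd (Int.castRingHom Eis) hdvd)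
  | mul d e hkd hke hd he =>
    have hne {x : Eis} (hx : IsCoprime (2 * (k : Eis)) x) : absNorm x ≠ 0 :=
      absNorm_eq_zero.not.mpr fun h0 =>
        not_isUnit_two_mul _ (isCoprime_zero_right.mp (h0 ▸ hx))
    rw [hq.mul_right, hd, he, absNorm_mul, jacobiSym.mul_right' _ (hne hkd) (hne hke), Int.cast_mul]

theorem prime_natCast_right (hq : IsQuadSym q) {x : Eis} {l : ℕ} (hl : l.Prime)
    (hxl : IsCoprime (2 * x) (l : Eis)) : q x l = (jacobiSym (absNorm x) l : ℤ) := by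
  rcases prime_natCast_or_exists_prime_absNorm_eq hl with hp | ⟨p, hp, hnorm⟩
  · have hcop : IsCoprime (2 : ℤ) (l : ℕ) ∧ IsCoprime (absNorm x : ℤ) l := by
      have h2 := isCoprime_absNorm (k := 2) (x := l) (by exact_mod_cast hxl.of_mul_left_left)
      rw [absNorm_natCast, Nat.cast_pow, IsCoprime.pow_right_iff two_pos] at h2
      exact ⟨h2, (isCoprime_absNorm (k := l) (by exact_mod_cast hxl.of_mul_left_right.symm)).symm⟩
    have hodd := odd_of_isCoprime_two hcop.1
    refine hq.eq_of_dvd_sub_pow hp hxl ?_ ?_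
    · exact_mod_cast jacobiSym.eq_one_or_neg_one (Int.isCoprime_iff_gcd_eq_one.mp hcop.2)
    · have hexp : (absNorm l - 1) / 2 = (l + 1) * ((l - 1) / 2) := by
        obtain ⟨m, rfl⟩ := hodd
        rw [absNorm_natCast, show (2 * m + 1) ^ 2 - 1 = 2 * ((2 * m + 2) * m) by grind]
        grind
      have hfrob : (l : Eis) ∣ absNorm x - x ^ (l + 1) := by
        rw [← mul_conjEquiv, pow_succ', ← mul_sub, ← dvd_neg, ← mul_neg, neg_sub]
        exact (dvd_pow_sub_conjEquiv hl (mod_three_eq_two_of_prime_natCast hl hp) x).mul_left x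
      have heuler : (l : Eis) ∣
          (jacobiSym (absNorm x) l : ℤ) - (absNorm x : Eis) ^ ((l - 1) / 2) := by
        exact_mod_cast map_dvd (Int.castRingHom Eis) (dvd_jacobiSym_sub_pow hl hodd (absNorm x))
      have hsum := dvd_add heuler (hfrob.trans (sub_dvd_pow_sub_pow _ _ ((l - 1) / 2)))
      rwa [sub_add_sub_cancel, ← pow_mul, ← hexp] at hsum
  · have hfactor : (l : Eis) = p * conjEquiv p := by rw [mul_conjEquiv, hnorm]
    rw [hfactor] at hxl
    have hxp := hxl.of_mul_right_left
    have hconj : IsCoprime (2 * conjEquiv x) p := by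
      simpa [map_ofNat conjEquiv 2, conjEquiv_conjEquiv] using
        hxl.of_mul_right_right.map conjEquiv.toRingHom
    have hprod : IsCoprime (2 * (x * conjEquiv x)) p := by
      rw [← mul_assoc]
      exact hxp.mul_left hconj.of_mul_left_right
    calc q x l = q x p * q x (conjEquiv p) := by rw [hfactor, hq.mul_right]
      _ = q x p * q (conjEquiv x) p := by
        rw [← hq.map_conjEquiv hconj, conjEquiv_conjEquiv]
      _ = q (absNorm x : ℤ) p := by rw [← hq.mul_left hprod, mul_conjEquiv, Int.cast_natCast]
      _ = (jacobiSym (absNorm x) l : ℤ) := by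
        rw [hq.intCast_left (by simpa [mul_conjEquiv] using hprod), hnorm]

theorem natCast_right (hq : IsQuadSym q) {x : Eis} {n : ℕ} (hxn : IsCoprime (2 * x) (n : Eis)) :
    q x n = (jacobiSym (absNorm x) n : ℤ) := by
  induction n using induction_on_primes with
  | zero => exact absurd (isCoprime_zero_right.mp (by simpa using hxn)) (not_isUnit_two_mul x)
  | one => simpa using hq.eq_one_of_isUnit x isUnit_one
  | prime_mul l n hl ih =>
    rw [Nat.cast_mul] at hxn ⊢
    have hn : n ≠ 0 := by
      rintro rfl
      exact not_isUnit_two_mul x (isCoprime_zero_right.mp (by simpa using hxn))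
    rw [hq.mul_right, hq.prime_natCast_right hl hxn.of_mul_right_left, ih hxn.of_mul_right_right,
      jacobiSym.mul_right' _ hl.ne_zero hn, Int.cast_mul]

theorem intCast_right (hq : IsQuadSym q) {x : Eis} {k : ℤ} (hxk : IsCoprime (2 * x) (k : Eis)) :
    q x k = (jacobiSym (absNorm x) k.natAbs : ℤ) := by
  have hassoc : Associated (k : Eis) k.natAbs := by
    simpa using (Int.associated_natAbs k).map (Int.castRingHom Eis)
  rw [hq.associated_right x hassoc]
  exact hq.natCast_right (hxk.of_isCoprime_of_dvd_right hassoc.symm.dvd)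

theorem mul_eq_of_dvd_mul_sub (hq : IsQuadSym q) {x y z d : Eis} (h2 : IsCoprime 2 d)
    (hx : IsCoprime x d) (hy : IsCoprime y d) (h : d ∣ x * y - z) : q x d * q y d = q z d := by
  have hxy := h2.mul_left (hx.mul_left hy)
  rw [← hq.mul_left hxy, hq.congr_left hxy h]

theorem intCast_neg_left_add_mul_tauO (hq : IsQuadSym q) {a b : ℤ} (hab : IsCoprime a b)
    (h : 4 ∣ a + b * tauO - 1) : q (-b : ℤ) (a + b * tauO) = 1 := by
  obtain ⟨ha, hb⟩ := four_dvd_add_mul_tauO_sub_one.mp h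
  have ha2 : a ≡ 1 [ZMOD 2] := ha.of_dvd (by norm_num)
  have hcop : IsCoprime (2 * ((-b : ℤ) : Eis)) (a + b * tauO) := by
    simpa using (isCoprime_two_of_four_dvd_sub_one h).mul_left
      (isCoprime_intCast_add_mul_tauO hab).neg_left
  have hmod : absNorm (a + b * tauO) ≡ a ^ 2 [ZMOD -b] := by
    rw [absNorm_add_mul_tauO]
    exact Int.modEq_iff_dvd.mpr ⟨b - a, by ring⟩
  rw [hq.intCast_left hcop, jacobiSym_eq_one_of_right_modEq_sq
    (Int.modEq_zero_iff_dvd.mp hb).neg_right (Int.odd_iff.mpr ha2) hab.neg_right hmod,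
    Int.cast_one]

theorem reciprocity_of_odd (hq : IsQuadSym q) {a b c d : ℤ} (hab : IsCoprime a b)
    (hα : 4 ∣ a + b * tauO - 1) (hcd : IsCoprime c d) (hd : Odd d)
    (h2β : IsCoprime 2 (c + d * tauO)) (h : IsCoprime (a + b * tauO) (c + d * tauO)) :
    q (a + b * tauO) (c + d * tauO) = q (c + d * tauO) (a + b * tauO) := by
  obtain ⟨ha, hb⟩ := four_dvd_add_mul_tauO_sub_one.mp hα
  have h2α := isCoprime_two_of_four_dvd_sub_one hα
  have hbα := (isCoprime_intCast_add_mul_tauO hab).neg_left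
  have hdβ := isCoprime_intCast_add_mul_tauO hcd
  have hNα := absNorm_add_mul_tauO a b
  have hNβ := absNorm_add_mul_tauO c d
  have hb1 := hq.intCast_neg_left_add_mul_tauO hab hα
  obtain ⟨m, hm⟩ : ∃ m : ℤ, m = d * a - c * b := ⟨_, rfl⟩
  have hmαβ : (m : Eis) = d * (a + b * tauO) - b * (c + d * tauO) := by
    rw [hm]
    push_cast
    ring
  generalize a + b * tauO = α, c + d * tauO = β at *
  have hβm : β ∣ d * α - m := ⟨b, by linear_combination -hmαβ⟩
  have hαm : α ∣ (-b : ℤ) * β - m := ⟨-d, by push_cast; linear_combination -hmαβ⟩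
  rw [← Int.cast_neg] at hbα
  have hmα : IsCoprime (m : Eis) α := isCoprime_of_dvd_sub (hbα.mul_left h.symm) hαm
  have hmβ : IsCoprime (m : Eis) β := isCoprime_of_dvd_sub (hdβ.mul_left h) hβm
  have hcore := jacobiSym_mul_jacobiSym_eq hNα hNβ hm ha hb hd hcd (odd_absNorm h2β)
    ((isCoprime_absNorm hmα).mul_right (isCoprime_absNorm hmβ))
  have hdd : q d β * q d β = 1 := by
    rcases hq.eq_one_or_neg_one (h2β.mul_left hdβ) with hd1 | hd1 <;> simp [hd1]
  calc q α β = q d β * (q d β * q α β) := by rw [← mul_assoc, hdd, one_mul]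
    _ = q d β * q m β := by rw [hq.mul_eq_of_dvd_mul_sub h2β hdβ h hβm]
    _ = q m α := by
      rw [hq.intCast_left (h2β.mul_left hdβ), hq.intCast_left (h2β.mul_left hmβ),
        hq.intCast_left (h2α.mul_left hmα)]
      exact_mod_cast hcore
    _ = q β α := by rw [← hq.mul_eq_of_dvd_mul_sub h2α hbα h.symm hαm, hb1, one_mul]

theorem tauO_left (hq : IsQuadSym q) {d : Eis} (hd : IsCoprime 2 d) : q tauO d = 1 := by
  have hτ : tauO = (tauO ^ 2) ^ 2 := by
    linear_combination (-tauO ^ 2 + tauO) * tauO_sq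
  rw [hτ]
  exact hq.sq_left (hd.mul_left
    (isCoprime_one_left.of_isCoprime_of_dvd_left (tauO_isUnit.pow 2).dvd))

theorem reciprocity_of_primitive (hq : IsQuadSym q) {a b c d : ℤ} (hab : IsCoprime a b)
    (hα : 4 ∣ a + b * tauO - 1) (hcd : IsCoprime c d)
    (h2 : IsCoprime 2 (c + d * tauO)) (h : IsCoprime (a + b * tauO) (c + d * tauO)) :
    q (a + b * tauO) (c + d * tauO) = q (c + d * tauO) (a + b * tauO) := by
  rcases Int.even_or_odd d with hd | hd
  · have hrot : (c + d * tauO) * tauO = (-d : ℤ) + (c - d : ℤ) * tauO := by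
      push_cast
      linear_combination d * tauO_sq
    have hassoc : Associated (c + d * tauO) ((-d : ℤ) + (c - d : ℤ) * tauO) :=
      hrot ▸ associated_mul_unit_right _ _ tauO_isUnit
    have hcop : IsCoprime (-d) (c - d) := by
      have := hcd.symm.neg_left.add_mul_left_right 1
      rwa [mul_one, ← sub_eq_add_neg] at this
    have hodd : Odd (c - d) :=
      (Int.isCoprime_two_left.mp (hcd.symm.of_isCoprime_of_dvd_left hd.two_dvd)).sub_even hd
    have h2α := isCoprime_two_of_four_dvd_sub_one hα
    calc q (a + b * tauO) (c + d * tauO)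
      _ = q (a + b * tauO) ((-d : ℤ) + (c - d : ℤ) * tauO) := hq.associated_right _ hassoc
      _ = q ((c + d * tauO) * tauO) (a + b * tauO) := by
        rw [hrot, hq.reciprocity_of_odd hab hα hcop hodd
          (h2.of_isCoprime_of_dvd_right hassoc.symm.dvd)
          (h.of_isCoprime_of_dvd_right hassoc.symm.dvd)]
      _ = q (c + d * tauO) (a + b * tauO) := by
        have hτ : IsCoprime tauO (a + b * tauO) :=
          isCoprime_one_left.of_isCoprime_of_dvd_left tauO_isUnit.dvd
        rw [hq.mul_left (h2α.mul_left (h.symm.mul_left hτ)), hq.tauO_left h2α, mul_one]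
  · exact hq.reciprocity_of_odd hab hα hcd hd h2 h

theorem reciprocity_intCast_right (hq : IsQuadSym q) {α : Eis} {k : ℤ} (hα : 4 ∣ α - 1)
    (h2 : IsCoprime (2 : Eis) k) (h : IsCoprime α k) : q α k = q k α := by
  rw [hq.intCast_right (h2.mul_left h),
    hq.intCast_left ((isCoprime_two_of_four_dvd_sub_one hα).mul_left h.symm),
    jacobiSym_comm_of_mod_four_eq_one (odd_of_isCoprime_two_intCast h2)
      (absNorm_mod_four_eq_one hα)]

theorem reciprocity_intCast_left (hq : IsQuadSym q) {x : Eis} {k : ℤ} (hk : k ≡ 1 [ZMOD 4])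
    (h2k : IsCoprime (2 : Eis) k) (h2x : IsCoprime 2 x) (h : IsCoprime (k : Eis) x) :
    q k x = q x k := by
  rw [hq.intCast_right (h2k.mul_left h.symm), hq.intCast_left (h2x.mul_left h),
    jacobiSym_comm_of_modEq_one hk (odd_absNorm h2x)]

theorem reciprocity (hq : IsQuadSym q) {α β : Eis} (hα : 4 ∣ α - 1) (h2 : IsCoprime 2 β)
    (h : IsCoprime α β) : q α β = q β α := by
  have hβ : β ≠ 0 := by
    rintro rfl
    exact not_isUnit_two (isCoprime_zero_right.mp h2)
  have h2α := isCoprime_two_of_four_dvd_sub_one hα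
  obtain ⟨g, a, b, hab, hg, hα', rfl⟩ := exists_eq_intCast_mul_primitive_of_four_dvd_sub_one hα
  obtain ⟨k, c, d, hcd, rfl⟩ := exists_eq_intCast_mul_primitive hβ
  have hint := hq.reciprocity_intCast_left hg h2α.of_mul_right_left h2 h.of_mul_left_left
  have hprim := hq.reciprocity_of_primitive hab hα' hcd h2.of_mul_right_right
    h.of_mul_left_right.of_mul_right_right
  have hmixed := hq.reciprocity_intCast_right hα' h2.of_mul_right_left
    h.of_mul_left_right.of_mul_right_left
  generalize (a : Eis) + b * tauO = α at *
  calc q (g * α) (k * (c + d * tauO))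
    _ = q g (k * (c + d * tauO)) * q α (k * (c + d * tauO)) := hq.mul_left (h2.mul_left h)
    _ = q (k * (c + d * tauO)) g * (q k α * q (c + d * tauO) α) := by
      rw [hint, hq.mul_right α, hmixed, hprim]
    _ = q (k * (c + d * tauO)) (g * α) := by
      rw [hq.mul_right, hq.mul_left (h2α.of_mul_right_right.mul_left h.of_mul_left_right.symm)]

theorem neg_one_left (hq : IsQuadSym q) {α : Eis} (hα : 4 ∣ α - 1) : q (-1) α = 1 := by
  have h2 := isCoprime_two_of_four_dvd_sub_one hα
  have hcop : IsCoprime (2 * ((-1 : ℤ) : Eis)) α := by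
    simpa only [Int.cast_neg, Int.cast_one, mul_neg_one] using h2.neg_left
  have hval := hq.intCast_left hcop
  rw [jacobiSym.at_neg_one (odd_absNorm h2),
    ZMod.χ₄_nat_one_mod_four (absNorm_mod_four_eq_one hα)] at hval
  exact_mod_cast hval

theorem three_left (hq : IsQuadSym q) {α : Eis} (hα : 4 ∣ α - 1) (h3 : IsCoprime 3 α) :
    q 3 α = 1 := by
  have h2 := isCoprime_two_of_four_dvd_sub_one hα
  have hthree : 3 = -1 * sqrtm3O ^ 2 := by
    unfold sqrtm3O
    linear_combination 4 * tauO_sq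
  have hsqrt : IsCoprime (sqrtm3O ^ 2) α :=
    h3.of_isCoprime_of_dvd_left (hthree ▸ dvd_mul_left _ _)
  rw [hthree, hq.mul_left (h2.mul_left (hthree ▸ h3)), hq.neg_one_left hα,
    hq.sq_left (h2.mul_left ((IsCoprime.pow_left_iff two_pos).mp hsqrt)), one_mul]

end IsQuadSym

theorem quadratic_symbol_flip_general {q : Eis → Eis → Eis} (hq : IsQuadSym q) {D DT c : Eis}
    (hDT : 4 ∣ DT - 1) (hdvd : DT ∣ D) (h2 : IsCoprime 2 D) (hc : IsCoprime (3 * c) DT) :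
    q DT (6 * c + D) = q (2 * c) DT := by
  have h2DT : IsCoprime 2 DT := Eis.isCoprime_two_of_four_dvd_sub_one hDT
  have h2c : IsCoprime (2 * c) DT := h2DT.mul_left hc.of_mul_left_right
  have h6c : IsCoprime (3 * (2 * c)) DT := hc.of_mul_left_left.mul_left h2c
  have hmod : DT ∣ 3 * (2 * c) - (6 * c + D) := by
    rwa [show 3 * (2 * c) - (6 * c + D) = -D by ring, dvd_neg]
  have h2den : IsCoprime 2 (6 * c + D) := by
    rw [show 6 * c + D = D + 2 * (3 * c) by ring]
    exact h2.add_mul_left_right _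
  calc q DT (6 * c + D)
    _ = q (6 * c + D) DT := hq.reciprocity hDT h2den (isCoprime_of_dvd_sub h6c hmod).symm
    _ = q (3 * (2 * c)) DT := (hq.congr_left (h2DT.mul_left h6c) hmod).symm
    _ = q 3 DT * q (2 * c) DT := hq.mul_left (h2DT.mul_left h6c)
    _ = q (2 * c) DT := by rw [hq.three_left hDT hc.of_mul_left_left, one_mul]

/-- From the **proof of Theorem 1.1** in [Qiu] (an instance of quadratic reciprocity in
`K = ℚ(√−3)`): with `D = π₁⋯πₙ` (`πₖ ≡ 1 (mod 12)` distinct primes of `ℤ[τ]`), `D_T` a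
subproduct of the `πₖ`, and `c ∈ O_K` relatively prime to `D`, one has
`(D_T/(6c+D))₂ = (2c/D_T)₂` for the quadratic residue symbol of `K`. -/
theorem quadratic_symbol_flip
    (n : ℕ) (prm : Fin n → Eis)
    (hprime : ∀ k, Prime (prm k))
    (hdistinct : ∀ j k, j ≠ k → prm j ≠ prm k)
    (hcong : ∀ k, (12 : Eis) ∣ (prm k - 1))
    (T : Finset (Fin n))
    (D DT : Eis) (hD : D = ∏ k, prm k) (hDT : DT = ∏ k ∈ T, prm k)
    (c : Eis) (hc : IsCoprime c D)
    (quadSym : Eis → Eis → Eis) (hquad : IsQuadSym quadSym) :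
    quadSym DT (6 * c + D) = quadSym (2 * c) DT := by
  have hprod (S : Finset (Fin n)) : 12 ∣ ∏ k ∈ S, prm k - 1 := by
    refine Finset.prod_induction prm (12 ∣ · - 1) (fun a b ha hb => ?_) (by simp) fun k _ => hcong k
    simpa using dvd_mul_sub_mul ha hb
  have h12DT : 12 ∣ DT - 1 := hDT ▸ hprod T
  have h4D : 4 ∣ D - 1 := .trans ⟨3, by norm_num⟩ (hD ▸ hprod Finset.univ : 12 ∣ D - 1)
  have h3DT : IsCoprime 3 DT := by
    obtain ⟨z, hz⟩ := h12DT
    exact ⟨-4 * z, 1, by linear_combination hz⟩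
  have hdvd : DT ∣ D := hD ▸ hDT ▸ Finset.prod_dvd_prod_of_subset T _ prm T.subset_univ
  exact quadratic_symbol_flip_general hquad (.trans ⟨3, by norm_num⟩ h12DT) hdvd
    (Eis.isCoprime_two_of_four_dvd_sub_one h4D)
    (h3DT.mul_left (hc.of_isCoprime_of_dvd_right hdvd))
end
end

section
/- For the Weierstrass ℘-function with period lattice L_ω = ω·ℤ[τ] satisfying ℘′(z)² = 4℘(z)³ − 1, one has ℘(ω/3, L_ω) = 1, ℘′(ω/3, L_ω) = −√3, and ℘″(ω/3, L_ω) = 6. -/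
noncomputable section

open Complex Real ComplexConjugate

/-!
Let `u = ω(1 - τ)/3`. It has order three modulo the lattice and is fixed by multiplication by `τ`
there, so homogeneity forces `℘(u) = 0`. The elliptic function `℘(z)℘(z + u)℘(z - u)` has no poles,
since at each pole of one factor the other two vanish; by Liouville it is the constant
`-℘'(u)² = g₃ = 1`. The translates of `ω/3` by `±u` are `τ²ω/3` and `τω/3` modulo the lattice, so at
`z = ω/3` the product is `℘(ω/3)³`; as `℘(ω/3)` is real, it equals `1`, and the differential
equation gives `℘'(ω/3)² = 3`. Differentiating that equation gives `℘'' = 6℘²`. On the interval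
`(0, ω)` the function `℘` is real and without zeros (there `4℘³ = ℘'² + 1 > 0`), so `℘'` increases
strictly up to its zero `ω/2` and is negative at `ω/3`.
-/

open Filter Topology
open scoped PeriodPair

section Liouville

theorem exists_forall_tendsto_of_periodic_of_meromorphicOrderAt_nonneg (Λ : Submodule ℤ ℂ)
    [DiscreteTopology Λ] [IsZLattice ℝ Λ] {f : ℂ → ℂ} (hf : Meromorphic f)
    (hper : ∀ z, ∀ l ∈ Λ, f (z + l) = f z) (hord : ∀ z, 0 ≤ meromorphicOrderAt f z) :
    ∃ c, ∀ z, Tendsto f (𝓝[≠] z) (𝓝 c) := by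
  have hfU : MeromorphicOn f Set.univ := fun z _ ↦ hf z
  set g := toMeromorphicNFOn f Set.univ
  have hgf (z : ℂ) : g =ᶠ[𝓝[≠] z] f := hfU.toMeromorphicNFOn_eq_self_on_nhdsNE (Set.mem_univ z)
  have hg_an (z : ℂ) : AnalyticAt ℂ g z := by
    rw [← (meromorphicNFOn_toMeromorphicNFOn f Set.univ
      (Set.mem_univ z)).meromorphicOrderAt_nonneg_iff_analyticAt,
      meromorphicOrderAt_congr (hgf z)]
    exact hord z
  have hg_lim (z : ℂ) : Tendsto f (𝓝[≠] z) (𝓝 (g z)) :=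
    ((hg_an z).continuousAt.tendsto.mono_left nhdsWithin_le_nhds).congr' (hgf z)
  have hg_per (z l : ℂ) (hl : l ∈ Λ) : g (z + l) = g z := by
    have hshift : Tendsto (· + l) (𝓝[≠] z) (𝓝[≠] (z + l)) :=
      (Filter.map_add_right_nhdsNE).le
    refine tendsto_nhds_unique ((hg_lim (z + l)).comp hshift) ((hg_lim z).congr fun w ↦ ?_)
    exact (hper w l hl).symm
  have hg_diff : Differentiable ℂ g := fun z ↦ (hg_an z).differentiableAt
  have hg_bdd : Bornology.IsBounded (Set.range g) :=
    (IsZLattice.isCompact_range_of_periodic Λ g hg_diff.continuous hg_per).isBounded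
  exact ⟨g 0, fun z ↦ hg_diff.apply_eq_apply_of_bounded hg_bdd z 0 ▸ hg_lim z⟩

end Liouville

section ThreeTorsion

variable {L : PeriodPair} {u : ℂ}

lemma weierstrassP_add_of_mem {l : ℂ} (hl : l ∈ L.lattice) (z : ℂ) : ℘[L] (z + l) = ℘[L] z :=
  L.weierstrassP_add_coe z ⟨l, hl⟩

lemma hasDerivAt_weierstrassP {z : ℂ} (hz : z ∉ L.lattice) : HasDerivAt ℘[L] (℘'[L] z) z := by
  rw [← L.deriv_weierstrassP]
  exact (L.analyticOnNhd_weierstrassP z hz).differentiableAt.hasDerivAt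

lemma analyticAt_weierstrassP_add {w z : ℂ} (hz : z + w ∉ L.lattice) :
    AnalyticAt ℂ (fun x ↦ ℘[L] (x + w)) z :=
  (L.analyticOnNhd_weierstrassP (z + w) hz).fun_comp (f := (· + w)) (by fun_prop)

lemma tendsto_sq_mul_weierstrassP_zero :
    Tendsto (fun z ↦ z ^ 2 * ℘[L] z) (𝓝[≠] 0) (𝓝 1) := by
  have hcont : ContinuousAt (fun z ↦ z ^ 2 * L.weierstrassPExcept 0 z + 1) 0 := by
    have := (L.analyticAt_weierstrassPExcept 0).continuousAt
    fun_prop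
  have hlim : Tendsto (fun z ↦ z ^ 2 * L.weierstrassPExcept 0 z + 1) (𝓝[≠] 0) (𝓝 1) := by
    simpa using hcont.tendsto.mono_left nhdsWithin_le_nhds
  refine hlim.congr' ?_
  filter_upwards [self_mem_nhdsWithin] with z hz
  simpa [Set.mem_compl_singleton_iff.1 hz] using
    (L.ite_eq_one_sub_sq_mul_weierstrassP 0 L.lattice.zero_mem z).symm

lemma tendsto_inv_mul_weierstrassP_add_sub (hu : u ∉ L.lattice) :
    Tendsto (fun z ↦ z⁻¹ * (℘[L] (z + u) - ℘[L] u)) (𝓝[≠] 0) (𝓝 (℘'[L] u)) := by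
  simpa only [smul_eq_mul, add_comm u] using
    (hasDerivAt_weierstrassP hu).tendsto_slope_zero

variable (L u) in
/-- The product of `℘ - ℘(u)` over the translates of `z` by `0`, `u` and `-u`. When `u` is a point
of order three, it is invariant under translation by `u` and the double pole of one factor cancels
against the zeros of the two others. -/
def torsionProduct (z : ℂ) : ℂ :=
  (℘[L] z - ℘[L] u) * (℘[L] (z + u) - ℘[L] u) * (℘[L] (z - u) - ℘[L] u)

lemma torsionProduct_add_of_mem {l : ℂ} (hl : l ∈ L.lattice) (z : ℂ) :
    torsionProduct L u (z + l) = torsionProduct L u z := by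
  simp only [torsionProduct, add_right_comm z l, add_sub_right_comm z l,
    weierstrassP_add_of_mem hl]

lemma torsionProduct_add_self (h3 : 3 * u ∈ L.lattice) (z : ℂ) :
    torsionProduct L u (z + u) = torsionProduct L u z := by
  have hwrap : ℘[L] (z + u + u) = ℘[L] (z - u) := by
    rw [← weierstrassP_add_of_mem h3 (z - u)]
    ring_nf
  simp only [torsionProduct, hwrap, add_sub_cancel_right]
  ring

lemma meromorphic_torsionProduct : Meromorphic (torsionProduct L u) := by
  have hshift (w : ℂ) : Meromorphic (fun z ↦ ℘[L] (z + w)) := fun z ↦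
    meromorphicAt_fun_comp_add_const_iff_meromorphicAt.2 (L.meromorphic_weierstrassP (z + w))
  have hsub := hshift (-u)
  simp only [← sub_eq_add_neg] at hsub
  exact ((L.meromorphic_weierstrassP.sub (.const _)).mul ((hshift u).sub (.const _))).mul
    (hsub.sub (.const _))

lemma analyticAt_torsionProduct {z : ℂ} (hz : z ∉ L.lattice) (hadd : z + u ∉ L.lattice)
    (hsub : z - u ∉ L.lattice) : AnalyticAt ℂ (torsionProduct L u) z := by
  have hP := L.analyticOnNhd_weierstrassP z hz
  have hP_add := analyticAt_weierstrassP_add hadd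
  have hP_sub := analyticAt_weierstrassP_add (w := -u) (sub_eq_add_neg z u ▸ hsub)
  simp only [← sub_eq_add_neg] at hP_sub
  unfold torsionProduct
  fun_prop

lemma tendsto_torsionProduct_zero (hu : u ∉ L.lattice) :
    Tendsto (torsionProduct L u) (𝓝[≠] 0) (𝓝 (-℘'[L] u ^ 2)) := by
  have hpole : Tendsto (fun z ↦ z ^ 2 * (℘[L] z - ℘[L] u)) (𝓝[≠] 0) (𝓝 1) := by
    have hconst : Tendsto (fun z : ℂ ↦ z ^ 2 * ℘[L] u) (𝓝[≠] 0) (𝓝 (0 ^ 2 * ℘[L] u)) :=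
      Tendsto.mono_left (Continuous.tendsto (by fun_prop) 0) nhdsWithin_le_nhds
    simpa [mul_sub] using tendsto_sq_mul_weierstrassP_zero.sub hconst
  have hzero := tendsto_inv_mul_weierstrassP_add_sub hu
  have hzero_neg := tendsto_inv_mul_weierstrassP_add_sub (neg_mem_iff.not.2 hu)
  simp only [L.weierstrassP_neg, L.derivWeierstrassP_neg, ← sub_eq_add_neg] at hzero_neg
  have hprod := (hpole.mul hzero).mul hzero_neg
  rw [one_mul, mul_neg, ← sq] at hprod
  refine hprod.congr' ?_
  filter_upwards [self_mem_nhdsWithin] with z (hz : z ≠ 0)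
  unfold torsionProduct
  field_simp

lemma meromorphicOrderAt_torsionProduct_nonneg (hu : u ∉ L.lattice) (h3 : 3 * u ∈ L.lattice)
    (z : ℂ) : 0 ≤ meromorphicOrderAt (torsionProduct L u) z := by
  by_cases hz : z ∉ L.lattice ∧ z + u ∉ L.lattice ∧ z - u ∉ L.lattice
  · exact (analyticAt_torsionProduct hz.1 hz.2.1 hz.2.2).meromorphicOrderAt_nonneg
  have hper : (fun x ↦ torsionProduct L u (x + z)) = torsionProduct L u := by
    funext x
    obtain hz | hz | hz : z ∈ L.lattice ∨ z + u ∈ L.lattice ∨ z - u ∈ L.lattice := by tauto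
    · exact torsionProduct_add_of_mem hz x
    · rw [← torsionProduct_add_self h3, add_assoc, torsionProduct_add_of_mem hz]
    · rw [← torsionProduct_add_of_mem hz x, ← torsionProduct_add_self h3 (x + (z - u)),
        add_assoc, sub_add_cancel]
  have horder : meromorphicOrderAt (torsionProduct L u) z =
      meromorphicOrderAt (torsionProduct L u) 0 := by
    conv_rhs => rw [← hper, meromorphicOrderAt_fun_comp_add_const_eq_meromorphicOrderAt, zero_add]
  rw [horder, ← tendsto_nhds_iff_meromorphicOrderAt_nonneg (meromorphic_torsionProduct 0)]
  exact ⟨_, tendsto_torsionProduct_zero hu⟩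

theorem torsionProduct_eq_neg_sq (hu : u ∉ L.lattice) (h3 : 3 * u ∈ L.lattice) {z : ℂ}
    (hz : z ∉ L.lattice) (hadd : z + u ∉ L.lattice) (hsub : z - u ∉ L.lattice) :
    torsionProduct L u z = -℘'[L] u ^ 2 := by
  obtain ⟨c, hc⟩ := exists_forall_tendsto_of_periodic_of_meromorphicOrderAt_nonneg L.lattice
    meromorphic_torsionProduct (fun z _ hl ↦ torsionProduct_add_of_mem hl z)
    (meromorphicOrderAt_torsionProduct_nonneg hu h3)
  have hcont := (analyticAt_torsionProduct hz hadd hsub).continuousAt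
  calc torsionProduct L u z
      = c := tendsto_nhds_unique (hcont.tendsto.mono_left nhdsWithin_le_nhds) (hc z)
    _ = -℘'[L] u ^ 2 := tendsto_nhds_unique (hc 0) (tendsto_torsionProduct_zero hu)

end ThreeTorsion

section SecondDerivative

variable {L : PeriodPair} {z : ℂ}

lemma eventually_notMem_lattice (hz : z ∉ L.lattice) : ∀ᶠ w in 𝓝 z, w ∉ L.lattice :=
  L.isClosed_lattice.isOpen_compl.mem_nhds hz

variable (L z) in
lemma eventually_derivWeierstrassP_ne_zero : ∀ᶠ w in 𝓝[≠] z, ℘'[L] w ≠ 0 := by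
  have hord : meromorphicOrderAt ℘'[L] 0 ≠ ⊤ := by
    rw [← L.deriv_weierstrassP, meromorphicOrderAt_deriv_eq_sub_one (n := -2) (by norm_num)
      (by exact_mod_cast L.order_weierstrassP 0 L.lattice.zero_mem)]
    exact WithTop.coe_ne_top
  rw [← meromorphicOrderAt_ne_top_iff_eventually_ne_zero (L.meromorphic_derivWeierstrassP z)]
  exact L.meromorphic_derivWeierstrassP.exists_meromorphicOrderAt_ne_top_iff_forall.1 ⟨0, hord⟩ z

lemma deriv_derivWeierstrassP_of_ne_zero (hz : z ∉ L.lattice) (hne : ℘'[L] z ≠ 0) :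
    deriv ℘'[L] z = 6 * ℘[L] z ^ 2 - L.g₂ / 2 := by
  have hP := hasDerivAt_weierstrassP hz
  have hP' := (L.analyticOnNhd_derivWeierstrassP z hz).differentiableAt.hasDerivAt
  have hcubic := (((hP.fun_pow 3).const_mul 4).sub (hP.const_mul L.g₂)).sub_const L.g₃
  have heq : 2 * ℘'[L] z * deriv ℘'[L] z = (12 * ℘[L] z ^ 2 - L.g₂) * ℘'[L] z := by
    refine (by simpa using hP'.fun_pow 2 : HasDerivAt _ _ z).unique
      ((hcubic.congr_of_eventuallyEq ?_).congr_deriv (by push_cast; ring))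
    filter_upwards [eventually_notMem_lattice hz] with w hw
    exact L.derivWeierstrassP_sq w hw
  refine mul_left_cancel₀ (mul_ne_zero two_ne_zero hne) ?_
  linear_combination heq

theorem deriv_derivWeierstrassP (hz : z ∉ L.lattice) :
    deriv ℘'[L] z = 6 * ℘[L] z ^ 2 - L.g₂ / 2 := by
  have hleft : ContinuousAt (deriv ℘'[L]) z :=
    (L.analyticOnNhd_derivWeierstrassP z hz).deriv.continuousAt
  have hright : ContinuousAt (fun w ↦ 6 * ℘[L] w ^ 2 - L.g₂ / 2) z := by
    have := (L.analyticOnNhd_weierstrassP z hz).continuousAt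
    fun_prop
  refine ((hleft.eventuallyEq_nhds_iff_eventuallyEq_nhdsNE hright).1 ?_).eq_of_nhds
  filter_upwards [nhdsWithin_le_nhds (eventually_notMem_lattice hz),
    eventually_derivWeierstrassP_ne_zero L z] with w hw hne
  exact deriv_derivWeierstrassP_of_ne_zero hw hne

end SecondDerivative

section Symmetry

variable {L : PeriodPair}

section Multiplication

variable {c : ℂ} (hc : c ≠ 0) (hL : ∀ z, c * z ∈ L.lattice ↔ z ∈ L.lattice)
include hc hL

lemma weierstrassP_mul (z : ℂ) : ℘[L] (c * z) = (c ^ 2)⁻¹ * ℘[L] z := by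
  let e : L.lattice ≃ L.lattice := (Equiv.mulLeft₀ c hc).subtypeEquiv fun z ↦ (hL z).symm
  have he (l : L.lattice) : (e l : ℂ) = c * l := rfl
  simp only [PeriodPair.weierstrassP]
  rw [← e.tsum_eq, ← tsum_mul_left]
  refine tsum_congr fun l ↦ ?_
  simp only [he, ← mul_sub, mul_pow, one_div, mul_inv]

lemma pow_mul_G (n : ℕ) : c ^ n * L.G n = L.G n := by
  let e : L.lattice ≃ L.lattice := (Equiv.mulLeft₀ c hc).subtypeEquiv fun z ↦ (hL z).symm
  have he (l : L.lattice) : (e l : ℂ) = c * l := rfl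
  have hsum : L.G n = (c ^ n)⁻¹ * L.G n := by
    rw [PeriodPair.G, ← tsum_mul_left, ← e.tsum_eq]
    simp only [he, mul_pow, mul_inv]
  rwa [eq_inv_mul_iff_mul_eq₀ (pow_ne_zero n hc)] at hsum

lemma weierstrassP_eq_zero_of_mul_sub_mem (hc2 : c ^ 2 ≠ 1) {u : ℂ} (hu : c * u - u ∈ L.lattice) :
    ℘[L] u = 0 := by
  have hfix : ℘[L] u = (c ^ 2)⁻¹ * ℘[L] u := by
    rw [← weierstrassP_mul hc hL, ← weierstrassP_add_of_mem hu u, add_sub_cancel]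
  rw [eq_inv_mul_iff_mul_eq₀ (pow_ne_zero 2 hc)] at hfix
  exact (mul_left_eq_self₀.1 hfix).resolve_left hc2

end Multiplication

section Conjugation

variable (hL : ∀ z ∈ L.lattice, conj z ∈ L.lattice)
include hL

lemma weierstrassP_conj (z : ℂ) : ℘[L] (conj z) = conj (℘[L] z) := by
  let e : L.lattice ≃ L.lattice := Complex.conjAe.toEquiv.subtypeEquiv fun z ↦
    ⟨hL z, fun h ↦ Complex.conj_conj z ▸ hL _ h⟩
  have he (l : L.lattice) : (e l : ℂ) = conj (l : ℂ) := rfl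
  simp only [PeriodPair.weierstrassP]
  rw [← e.tsum_eq, Complex.conj_tsum]
  simp only [he, map_sub, map_div₀, map_pow, map_one]

lemma ofReal_re_weierstrassP (s : ℝ) : ((℘[L] s).re : ℂ) = ℘[L] s := by
  rw [← Complex.conj_eq_iff_re, ← weierstrassP_conj hL, Complex.conj_ofReal]

lemma derivWeierstrassP_conj (z : ℂ) : ℘'[L] (conj z) = conj (℘'[L] z) := by
  have hP : conj ∘ ℘[L] ∘ conj = ℘[L] := by
    funext w
    simp only [Function.comp_apply, weierstrassP_conj hL, Complex.conj_conj]
  have hP' : ℘'[L] = conj ∘ ℘'[L] ∘ conj := by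
    rw [← L.deriv_weierstrassP, ← deriv_conj_conj, hP]
  conv_lhs => rw [hP']
  simp only [Function.comp_apply, Complex.conj_conj]

lemma ofReal_re_derivWeierstrassP (s : ℝ) : ((℘'[L] s).re : ℂ) = ℘'[L] s := by
  rw [← Complex.conj_eq_iff_re, ← derivWeierstrassP_conj hL, Complex.conj_ofReal]

end Conjugation

end Symmetry

section RealPeriod

variable {L : PeriodPair}

lemma derivWeierstrassP_eq_zero_of_two_mul_mem {z : ℂ} (hz : 2 * z ∈ L.lattice) :
    ℘'[L] z = 0 := by
  have hodd : ℘'[L] z = -℘'[L] z := by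
    rw [← L.derivWeierstrassP_neg, ← L.derivWeierstrassP_add_coe (-z) ⟨2 * z, hz⟩]
    congr 1
    ring
  exact self_eq_neg.1 hodd

variable (hL : ∀ z ∈ L.lattice, conj z ∈ L.lattice) (hg₂ : L.g₂ = 0) (hg₃ : 0 < L.g₃.re)
include hL hg₂ hg₃

lemma re_deriv_derivWeierstrassP_pos {s : ℝ} (hs : (s : ℂ) ∉ L.lattice) :
    0 < (deriv ℘'[L] s).re := by
  have hP := ofReal_re_weierstrassP hL s
  have hP' := ofReal_re_derivWeierstrassP hL s
  have hne : (℘[L] s).re ≠ 0 := by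
    intro h0
    have hode := L.derivWeierstrassP_sq s hs
    rw [← hP, ← hP', h0, hg₂] at hode
    have hneg : (℘'[L] s).re ^ 2 = -L.g₃.re := by
      simpa [← Complex.ofReal_pow] using congrArg Complex.re hode
    linarith [sq_nonneg (℘'[L] s).re]
  have hre : (deriv ℘'[L] s).re = 6 * (℘[L] s).re ^ 2 := by
    rw [deriv_derivWeierstrassP hs, hg₂, ← hP]
    simp [← Complex.ofReal_pow]
  rw [hre]
  positivity

variable {ω : ℝ} (hω : (ω : ℂ) ∈ L.lattice) (hgap : ∀ s ∈ Set.Ioo 0 ω, (s : ℂ) ∉ L.lattice)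
include hgap

lemma strictMonoOn_re_derivWeierstrassP :
    StrictMonoOn (fun s : ℝ ↦ (℘'[L] s).re) (Set.Ioo 0 ω) := by
  have hderiv (s : ℝ) (hs : s ∈ Set.Ioo 0 ω) :
      HasDerivAt (fun s : ℝ ↦ (℘'[L] s).re) (deriv ℘'[L] s).re s :=
    (L.analyticOnNhd_derivWeierstrassP s (hgap s hs)).differentiableAt.hasDerivAt.real_of_complex
  refine strictMonoOn_of_deriv_pos (convex_Ioo 0 ω)
    (fun s hs ↦ (hderiv s hs).continuousAt.continuousWithinAt) fun s hs ↦ ?_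
  rw [interior_Ioo] at hs
  rw [(hderiv s hs).deriv]
  exact re_deriv_derivWeierstrassP_pos hL hg₂ hg₃ (hgap s hs)

include hω

lemma re_derivWeierstrassP_neg {s : ℝ} (hs : s ∈ Set.Ioo 0 (ω / 2)) : (℘'[L] s).re < 0 := by
  obtain ⟨hs0, hs_half⟩ := hs
  have hhalf : ℘'[L] (ω / 2 : ℝ) = 0 :=
    derivWeierstrassP_eq_zero_of_two_mul_mem (by push_cast; rwa [mul_div_cancel₀ _ two_ne_zero])
  have hlt := strictMonoOn_re_derivWeierstrassP hL hg₂ hg₃ hgap ⟨hs0, by linarith⟩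
    ⟨by linarith, by linarith⟩ hs_half
  simpa only [hhalf, Complex.zero_re] using hlt

end RealPeriod

section HexagonalLattice

lemma tau_re : tau.re = -1 / 2 := by simp [tau]

lemma tau_im : tau.im = √3 / 2 := by simp [tau]

lemma conj_tau : conj tau = -1 - tau := by
  apply Complex.ext
  · rw [Complex.conj_re, Complex.sub_re, tau_re]
    norm_num
  · rw [Complex.conj_im, Complex.sub_im, tau_im]
    norm_num

lemma tau_sq : tau ^ 2 = -1 - tau := by
  have hsqrt : ((√3 : ℝ) : ℂ) ^ 2 = 3 := by exact_mod_cast Real.sq_sqrt (by norm_num : (0 : ℝ) ≤ 3)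
  unfold tau
  linear_combination (3 / 4 : ℂ) * Complex.I_sq + Complex.I ^ 2 / 4 * hsqrt

lemma tau_cube : tau ^ 3 = 1 := by linear_combination (tau - 1) * tau_sq

lemma tau_ne_zero : tau ≠ 0 := fun h ↦ by simpa [h] using tau_cube

lemma tau_ne_one : tau ≠ 1 := fun h ↦ by
  have hre := congrArg Complex.re h
  rw [tau_re, Complex.one_re] at hre
  norm_num at hre

lemma tau_sq_ne_one : tau ^ 2 ≠ 1 := fun h ↦ by
  simpa [pow_succ _ 2, h, tau_ne_one] using tau_cube

lemma mem_Eis_iff {z : ℂ} : z ∈ Eis ↔ ∃ m n : ℤ, m + n * tau = z := by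
  constructor
  · intro hz
    induction hz using Subring.closure_induction with
    | mem x hx => exact ⟨0, 1, by simp [Set.mem_singleton_iff.1 hx]⟩
    | zero => exact ⟨0, 0, by simp⟩
    | one => exact ⟨1, 0, by simp⟩
    | add x y _ _ hx hy =>
      obtain ⟨m, n, rfl⟩ := hx
      obtain ⟨m', n', rfl⟩ := hy
      exact ⟨m + m', n + n', by push_cast; ring⟩
    | neg x _ hx =>
      obtain ⟨m, n, rfl⟩ := hx
      exact ⟨-m, -n, by push_cast; ring⟩
    | mul x y _ _ hx hy =>
      obtain ⟨m, n, rfl⟩ := hx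
      obtain ⟨m', n', rfl⟩ := hy
      refine ⟨m * m' - n * n', m * n' + n * m' - n * n', ?_⟩
      push_cast
      linear_combination -(n * n' : ℂ) * tau_sq
  · rintro ⟨m, n, rfl⟩
    exact add_mem (intCast_mem _ _) (mul_mem (intCast_mem _ _) tauO.2)

/-- The period pair `(ω, ωτ)`, whose lattice is `ω·ℤ[τ]`. -/
def hexagonalPair (ω : ℝ) (hω : ω ≠ 0) : PeriodPair where
  ω₁ := ω
  ω₂ := ω * tau
  indep := by
    rw [LinearIndependent.pair_iff]
    intro a b hab
    have him : b * (ω * tau.im) = 0 := by simpa using congrArg Complex.im hab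
    have hb : b = 0 := by simpa [hω, tau_im] using him
    have hre : a * ω = 0 := by simpa [hb] using congrArg Complex.re hab
    exact ⟨(mul_eq_zero.1 hre).resolve_right hω, hb⟩

variable {ω : ℝ} {hω : ω ≠ 0}

lemma mem_hexagonalPair_lattice {z : ℂ} :
    z ∈ (hexagonalPair ω hω).lattice ↔ ∃ m n : ℤ, m * (ω : ℂ) + n * (ω * tau) = z :=
  PeriodPair.mem_lattice

lemma inLattice_iff_mem_lattice {z : ℂ} : inLattice ω z ↔ z ∈ (hexagonalPair ω hω).lattice := by
  rw [mem_hexagonalPair_lattice]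
  constructor
  · rintro ⟨⟨a, ha⟩, rfl⟩
    obtain ⟨m, n, rfl⟩ := mem_Eis_iff.1 ha
    exact ⟨m, n, by ring⟩
  · rintro ⟨m, n, rfl⟩
    exact ⟨⟨m + n * tau, mem_Eis_iff.2 ⟨m, n, rfl⟩⟩, by ring⟩

lemma tau_mul_mem_lattice_iff (z : ℂ) :
    tau * z ∈ (hexagonalPair ω hω).lattice ↔ z ∈ (hexagonalPair ω hω).lattice := by
  simp only [mem_hexagonalPair_lattice]
  constructor
  · rintro ⟨m, n, h⟩
    refine ⟨n - m, -m, ?_⟩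
    push_cast
    linear_combination tau ^ 2 * h - (ω * m + n * ω * (tau - 1) : ℂ) * tau_sq + z * tau_cube
  · rintro ⟨m, n, rfl⟩
    refine ⟨-n, m - n, ?_⟩
    push_cast
    linear_combination (-(n : ℂ) * ω) * tau_sq

lemma conj_mem_lattice {z : ℂ} (hz : z ∈ (hexagonalPair ω hω).lattice) :
    conj z ∈ (hexagonalPair ω hω).lattice := by
  rw [mem_hexagonalPair_lattice] at *
  obtain ⟨m, n, rfl⟩ := hz
  refine ⟨m - n, -n, ?_⟩
  simp only [map_add, map_mul, conj_tau, Complex.conj_ofReal, map_intCast, Int.cast_sub,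
    Int.cast_neg]
  ring

lemma ofReal_notMem_lattice {s : ℝ} (hs : s ∈ Set.Ioo 0 ω) :
    (s : ℂ) ∉ (hexagonalPair ω hω).lattice := by
  rw [mem_hexagonalPair_lattice]
  rintro ⟨m, n, h⟩
  obtain ⟨hs0, hsω⟩ := hs
  have hω0 : 0 < ω := hs0.trans hsω
  have hn : n = 0 := by simpa [hω, tau_im] using congrArg Complex.im h
  have hm : m * ω = s := by simpa [hn] using congrArg Complex.re h
  have hm0 : 0 < m := by
    rw [← hm] at hs0
    exact_mod_cast pos_of_mul_pos_left hs0 hω0.le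
  have hm1 : m < 1 := by
    rw [← hm] at hsω
    exact_mod_cast (mul_lt_iff_lt_one_left hω0).1 hsω
  omega

lemma notMem_lattice_of_den_ne_one {α β : ℚ} {z : ℂ} (hz : α * (ω : ℂ) + β * (ω * tau) = z)
    (hα : α.den ≠ 1) : z ∉ (hexagonalPair ω hω).lattice := fun hmem ↦ by
  rw [← hz] at hmem
  exact hα (PeriodPair.mul_ω₁_add_mul_ω₂_mem_lattice (L := hexagonalPair ω hω) |>.1 hmem).1

lemma third_period_notMem_lattice : (ω / 3 : ℂ) ∉ (hexagonalPair ω hω).lattice :=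
  notMem_lattice_of_den_ne_one (α := 1 / 3) (β := 0) (by push_cast; ring) (by norm_num)

variable (hω) in
lemma wp_eq_weierstrassP : wp ω = ℘[hexagonalPair ω hω] := by
  set L := hexagonalPair ω hω
  funext z
  have hmem (w : ℂ) : w ∈ {w | inLattice ω w ∧ w ≠ 0} ↔ w ∈ (L.lattice : Set ℂ) ∧ w ≠ 0 :=
    and_congr_left' inLattice_iff_mem_lattice
  let term (w : ℂ) : ℂ := 1 / (z - w) ^ 2 - 1 / w ^ 2
  have hsum : ∑' a : {w | inLattice ω w ∧ w ≠ 0}, term a = L.weierstrassPExcept 0 z := by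
    have hexcept : L.weierstrassPExcept 0 z =
      ∑' l : (L.lattice : Set ℂ), if (l : ℂ) = 0 then 0 else term l := rfl
    rw [hexcept, tsum_subtype, tsum_subtype (L.lattice : Set ℂ) fun w ↦ if w = 0 then 0 else term w]
    refine tsum_congr fun w ↦ ?_
    simp only [Set.indicator, hmem]
    split_ifs <;> grind
  have hzero := L.weierstrassPExcept_add 0 z
  simp only [ZeroMemClass.coe_zero, sub_zero, zero_pow two_ne_zero, div_zero] at hzero
  rw [← hzero, add_comm, ← hsum]
  rfl

lemma weierstrassP_tau_mul (z : ℂ) :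
    ℘[hexagonalPair ω hω] (tau * z) = tau * ℘[hexagonalPair ω hω] z := by
  rw [weierstrassP_mul tau_ne_zero tau_mul_mem_lattice_iff,
    inv_eq_of_mul_eq_one_left (by rw [← pow_succ', tau_cube])]

lemma hexagonalPair_g₂ : (hexagonalPair ω hω).g₂ = 0 := by
  have hG := pow_mul_G tau_ne_zero (tau_mul_mem_lattice_iff (hω := hω)) 4
  rw [pow_succ, tau_cube, one_mul] at hG
  rw [PeriodPair.g₂, (mul_left_eq_self₀.1 hG).resolve_left tau_ne_one, mul_zero]

/-- A point of order three modulo `ω·ℤ[τ]` fixed by multiplication by `τ`; by homogeneity it is a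
zero of `℘`. -/
def tauFixedPoint (ω : ℝ) : ℂ := ω * (1 - tau) / 3

lemma tauFixedPoint_notMem_lattice : tauFixedPoint ω ∉ (hexagonalPair ω hω).lattice :=
  notMem_lattice_of_den_ne_one (α := 1 / 3) (β := -1 / 3)
    (by unfold tauFixedPoint; push_cast; ring) (by norm_num)

lemma three_mul_tauFixedPoint_mem_lattice :
    3 * tauFixedPoint ω ∈ (hexagonalPair ω hω).lattice :=
  mem_hexagonalPair_lattice.2 ⟨1, -1, by unfold tauFixedPoint; push_cast; ring⟩

lemma tau_mul_tauFixedPoint_sub_mem_lattice :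
    tau * tauFixedPoint ω - tauFixedPoint ω ∈ (hexagonalPair ω hω).lattice :=
  mem_hexagonalPair_lattice.2 ⟨0, 1, by
    unfold tauFixedPoint
    push_cast
    linear_combination (ω / 3 : ℂ) * tau_sq⟩

lemma weierstrassP_tauFixedPoint : ℘[hexagonalPair ω hω] (tauFixedPoint ω) = 0 :=
  weierstrassP_eq_zero_of_mul_sub_mem tau_ne_zero tau_mul_mem_lattice_iff tau_sq_ne_one
    tau_mul_tauFixedPoint_sub_mem_lattice

theorem weierstrassP_third_period_pow_three :
    ℘[hexagonalPair ω hω] (ω / 3) ^ 3 = (hexagonalPair ω hω).g₃ := by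
  set L := hexagonalPair ω hω
  set u := tauFixedPoint ω with hu
  have hu_notMem : u ∉ L.lattice := tauFixedPoint_notMem_lattice
  have hPu : ℘[L] u = 0 := weierstrassP_tauFixedPoint
  have hz : (ω / 3 : ℂ) ∉ L.lattice := third_period_notMem_lattice
  have hω₁ : (ω : ℂ) ∈ L.lattice := L.ω₁_mem_lattice
  have hsub : ω / 3 - u = tau * (ω / 3) := by
    rw [hu, tauFixedPoint]
    ring
  have hadd : ω / 3 + u = tau * (tau * (ω / 3)) + ω := by
    rw [hu, tauFixedPoint]
    linear_combination (-(ω : ℂ) / 3) * tau_sq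
  have hadd_notMem : ω / 3 + u ∉ L.lattice := by
    rwa [hadd, Submodule.add_mem_iff_left _ hω₁, tau_mul_mem_lattice_iff, tau_mul_mem_lattice_iff]
  have hsub_notMem : ω / 3 - u ∉ L.lattice := by rwa [hsub, tau_mul_mem_lattice_iff]
  have hprod := torsionProduct_eq_neg_sq hu_notMem three_mul_tauFixedPoint_mem_lattice hz
    hadd_notMem hsub_notMem
  rw [torsionProduct, hPu, hadd, hsub, weierstrassP_add_of_mem hω₁, weierstrassP_tau_mul,
    weierstrassP_tau_mul, L.derivWeierstrassP_sq u hu_notMem, hPu, hexagonalPair_g₂] at hprod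
  linear_combination hprod - ℘[L] (ω / 3) ^ 3 * tau_cube

lemma hexagonalPair_g₃_eq_one {z : ℂ} (hz : z ∉ (hexagonalPair ω hω).lattice)
    (hODE : ℘'[hexagonalPair ω hω] z ^ 2 = 4 * ℘[hexagonalPair ω hω] z ^ 3 - 1) :
    (hexagonalPair ω hω).g₃ = 1 := by
  have hcubic := (hexagonalPair ω hω).derivWeierstrassP_sq z hz
  rw [hexagonalPair_g₂] at hcubic
  linear_combination hcubic - hODE

theorem weierstrassP_third_period (hg₃ : (hexagonalPair ω hω).g₃ = 1) :
    ℘[hexagonalPair ω hω] (ω / 3) = 1 := by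
  obtain ⟨x, hx⟩ : ∃ x : ℝ, (x : ℂ) = ℘[hexagonalPair ω hω] (ω / 3) :=
    ⟨_, by exact_mod_cast ofReal_re_weierstrassP (fun _ ↦ conj_mem_lattice) (ω / 3)⟩
  have hcube := weierstrassP_third_period_pow_three (hω := hω)
  rw [hg₃, ← hx] at hcube
  have hx_one : x = 1 := (Odd.pow_inj (by decide : Odd 3)).1 <| by
    rw [one_pow]
    exact_mod_cast hcube
  rw [← hx, hx_one, Complex.ofReal_one]

theorem derivWeierstrassP_third_period (hpos : 0 < ω) (hg₃ : (hexagonalPair ω hω).g₃ = 1) :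
    ℘'[hexagonalPair ω hω] (ω / 3) = -√3 := by
  set L := hexagonalPair ω hω
  have hconj : ∀ z ∈ L.lattice, conj z ∈ L.lattice := fun _ ↦ conj_mem_lattice
  obtain ⟨y, hy⟩ : ∃ y : ℝ, (y : ℂ) = ℘'[L] (ω / 3) :=
    ⟨_, by exact_mod_cast ofReal_re_derivWeierstrassP hconj (ω / 3)⟩
  have hneg : y < 0 := by
    simpa [← hy] using re_derivWeierstrassP_neg hconj hexagonalPair_g₂ (by simp [hg₃])
      L.ω₁_mem_lattice (fun _ ↦ ofReal_notMem_lattice) (s := ω / 3) ⟨by positivity, by linarith⟩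
  have hcubic := L.derivWeierstrassP_sq (ω / 3) third_period_notMem_lattice
  rw [weierstrassP_third_period hg₃, hexagonalPair_g₂, hg₃, ← hy] at hcubic
  have hsq : y ^ 2 = 3 := by
    norm_num at hcubic
    exact_mod_cast hcubic
  have hsqrt : √3 = -y := by rw [← hsq, Real.sqrt_sq_eq_abs, abs_of_neg hneg]
  rw [← hy, hsqrt, Complex.ofReal_neg, neg_neg]

theorem deriv_derivWeierstrassP_third_period (hg₃ : (hexagonalPair ω hω).g₃ = 1) :
    deriv ℘'[hexagonalPair ω hω] (ω / 3) = 6 := by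
  rw [deriv_derivWeierstrassP third_period_notMem_lattice, weierstrassP_third_period hg₃,
    hexagonalPair_g₂]
  norm_num

end HexagonalLattice

/-- From [Qiu], (2.6): `℘(ω/3) = 1`, `℘′(ω/3) = −√3`, `℘″(ω/3) = 6`.
Here `ω > 0` is pinned down by the differential equation `℘′² = 4℘³ − 1` for the
lattice `L_ω = ω·ℤ[τ]` (equivalently, the lattice invariants are `g₂ = 0`, `g₃ = 1`). -/
theorem wp_values_at_third_period
    (ω : ℝ) (hω : 0 < ω)
    (hODE : ∀ z : ℂ, ¬ inLattice ω z → deriv (wp ω) z ^ 2 = 4 * wp ω z ^ 3 - 1) :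
    wp ω ((ω : ℂ) / 3) = 1 ∧ deriv (wp ω) ((ω : ℂ) / 3) = -(Real.sqrt 3 : ℂ) ∧
    deriv (deriv (wp ω)) ((ω : ℂ) / 3) = 6 := by
  rw [wp_eq_weierstrassP hω.ne'] at hODE ⊢
  simp only [inLattice_iff_mem_lattice (hω := hω.ne'), PeriodPair.deriv_weierstrassP] at hODE ⊢
  have hg₃ : (hexagonalPair ω hω.ne').g₃ = 1 :=
    hexagonalPair_g₃_eq_one third_period_notMem_lattice (hODE _ third_period_notMem_lattice)
  exact ⟨weierstrassP_third_period hg₃, derivWeierstrassP_third_period hω hg₃,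
    deriv_derivWeierstrassP_third_period hg₃⟩
end
end
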